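/- arXiv:1109.5202 — 4 statements merged into one kernel-verified Lean document; each statement's English description precedes it below -/
import Mathlib

section
/- Let n and r be positive integers and let x_{ik} (1 ≤ i ≤ n, 1 ≤ k ≤ r) be arbitrary nonnegative real numbers. Set c_i := Σ_k x_{ik} and c := max_i c_i. Then c·Σ_k (Σ_i x_{ik})² − (Σ_i c_i)·(Σ_{i,k} x_{ik}²) ≤ c·(Σ_i c_i)² − (Σ_i c_i)·(Σ_i c_i²). Moreover, if min_i c_i > 0, then equality holds if and only if either (i) x_{ik} = x_{jk} for all i, j, k, or (ii) there exists some l such that x_{ik} = 0 for all i and all k ≠ l. -/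
/-!
Regard the rows as vectors `x i` of Euclidean space, so that `‖x i‖ ≤ c i ≤ c`, and write
`x i = c i • p i` with `‖p i‖ ≤ 1`. Twice the difference of the two sides is then the sum over all
pairs `(i, j)` of
`c i * c j * (c * ‖p i - p j‖² + (c - c i) * (1 - ‖p i‖²) + (c - c j) * (1 - ‖p j‖²))`,
whose terms are visibly nonnegative. If all of them vanish, the rows are proportional, and either
every row sum is `c`, which makes the rows equal, or some row has equal `ℓ¹` and `ℓ²` norms, which
confines it, and with it every other row, to a single column.
-/

section InnerProductSpace

variable {ι E : Type*} [NormedAddCommGroup E]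

/-- The contribution of two vectors `p`, `q` with weights `a`, `b` to Harcos' inequality: summed
over all pairs of vectors with the factor `a * b`, it gives twice the gap `harcosGap` below. -/
def harcosPairGap (M a b : ℝ) (p q : E) : ℝ :=
  M * ‖p - q‖ ^ 2 + (M - a) * (1 - ‖p‖ ^ 2) + (M - b) * (1 - ‖q‖ ^ 2)

/-- The right-hand side minus the left-hand side of Harcos' inequality, for vectors `v i` of an
arbitrary normed space in place of the rows, weights `w i` in place of the row sums, and `M` in
place of the maximal row sum. -/
def harcosGap [Fintype ι] (M : ℝ) (w : ι → ℝ) (v : ι → E) : ℝ :=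
  (M * (∑ i, w i) ^ 2 - (∑ i, w i) * ∑ i, w i ^ 2) -
    (M * ‖∑ i, v i‖ ^ 2 - (∑ i, w i) * ∑ i, ‖v i‖ ^ 2)

lemma sub_mul_one_sub_norm_sq_nonneg {M a : ℝ} {p : E} (ha : a ≤ M) (hp : ‖p‖ ≤ 1) :
    0 ≤ (M - a) * (1 - ‖p‖ ^ 2) :=
  mul_nonneg (sub_nonneg.2 ha) (sub_nonneg.2 (pow_le_one₀ (norm_nonneg p) hp))

lemma sub_mul_one_sub_norm_sq_eq_zero_iff {M a : ℝ} {p : E} :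
    (M - a) * (1 - ‖p‖ ^ 2) = 0 ↔ a = M ∨ ‖p‖ = 1 := by
  rw [mul_eq_zero, sub_eq_zero, sub_eq_zero, eq_comm, eq_comm (a := (1 : ℝ)),
    pow_eq_one_iff_of_nonneg (norm_nonneg p) two_ne_zero]

lemma harcosPairGap_nonneg {M a b : ℝ} {p q : E} (hM : 0 ≤ M) (ha : a ≤ M) (hb : b ≤ M)
    (hp : ‖p‖ ≤ 1) (hq : ‖q‖ ≤ 1) : 0 ≤ harcosPairGap M a b p q :=
  add_nonneg (add_nonneg (mul_nonneg hM (sq_nonneg _)) (sub_mul_one_sub_norm_sq_nonneg ha hp))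
    (sub_mul_one_sub_norm_sq_nonneg hb hq)

lemma harcosPairGap_eq_zero_iff {M a b : ℝ} {p q : E} (hM : 0 < M) (ha : a ≤ M) (hb : b ≤ M)
    (hp : ‖p‖ ≤ 1) (hq : ‖q‖ ≤ 1) :
    harcosPairGap M a b p q = 0 ↔ p = q ∧ (a = M ∨ ‖p‖ = 1) ∧ (b = M ∨ ‖q‖ = 1) := by
  have hpq : 0 ≤ M * ‖p - q‖ ^ 2 := by positivity
  have hap := sub_mul_one_sub_norm_sq_nonneg ha hp
  have hbq := sub_mul_one_sub_norm_sq_nonneg hb hq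
  rw [harcosPairGap, add_eq_zero_iff_of_nonneg (add_nonneg hpq hap) hbq,
    add_eq_zero_iff_of_nonneg hpq hap, sub_mul_one_sub_norm_sq_eq_zero_iff,
    sub_mul_one_sub_norm_sq_eq_zero_iff, mul_eq_zero_iff_left hM.ne', sq_eq_zero_iff,
    norm_sub_eq_zero_iff, and_assoc]

lemma exists_smul_eq_of_norm_le [NormedSpace ℝ E] {v : E} {a : ℝ} (h : ‖v‖ ≤ a) :
    ∃ p : E, ‖p‖ ≤ 1 ∧ a • p = v := by
  have ha : 0 ≤ a := (norm_nonneg v).trans h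
  refine ⟨a⁻¹ • v, ?_, ?_⟩
  · rw [norm_smul, norm_inv, Real.norm_of_nonneg ha]
    exact inv_mul_le_one_of_le₀ h ha
  · rcases eq_or_ne a 0 with rfl | ha'
    · rw [zero_smul, norm_le_zero_iff.1 h]
    · exact smul_inv_smul₀ ha' v

variable [Fintype ι] [InnerProductSpace ℝ E]

open scoped InnerProductSpace

lemma norm_sum_smul_sq (w : ι → ℝ) (p : ι → E) :
    ‖∑ i, w i • p i‖ ^ 2 = ∑ i, ∑ j, w i * w j * ⟪p i, p j⟫_ℝ := by
  rw [← real_inner_self_eq_norm_sq, sum_inner]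
  simp only [inner_sum, real_inner_smul_left, real_inner_smul_right, mul_assoc,
    mul_left_comm (w _) (w _)]

lemma harcosGap_smul (M : ℝ) (w : ι → ℝ) (p : ι → E) :
    harcosGap M w (fun i => w i • p i) =
      ∑ i, ∑ j, w i * w j * (M * (1 - ⟪p i, p j⟫_ℝ) - w i * (1 - ‖p i‖ ^ 2)) := by
  rw [harcosGap, norm_sum_smul_sq, mul_comm (∑ i, w i) (∑ i, w i ^ 2),
    mul_comm (∑ i, w i) (∑ i, ‖w i • p i‖ ^ 2), sq (∑ i, w i)]
  simp only [Finset.sum_mul_sum]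
  simp only [Finset.mul_sum, ← Finset.sum_sub_distrib, norm_smul, mul_pow, Real.norm_eq_abs, sq_abs]
  exact Finset.sum_congr rfl fun i _ => Finset.sum_congr rfl fun j _ => by ring

lemma two_mul_harcosGap_smul (M : ℝ) (w : ι → ℝ) (p : ι → E) :
    2 * harcosGap M w (fun i => w i • p i) =
      ∑ i, ∑ j, w i * w j * harcosPairGap M (w i) (w j) (p i) (p j) := by
  rw [harcosGap_smul, two_mul]
  nth_rewrite 2 [Finset.sum_comm]
  simp only [← Finset.sum_add_distrib]
  refine Finset.sum_congr rfl fun i _ => Finset.sum_congr rfl fun j _ => ?_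
  rw [harcosPairGap, norm_sub_sq_real, real_inner_comm]
  ring

theorem harcosGap_nonneg {M : ℝ} {w : ι → ℝ} {v : ι → E} (hv : ∀ i, ‖v i‖ ≤ w i)
    (hw : ∀ i, w i ≤ M) : 0 ≤ harcosGap M w v := by
  have hw₀ i : 0 ≤ w i := (norm_nonneg _).trans (hv i)
  choose p hp hpv using fun i => exists_smul_eq_of_norm_le (hv i)
  obtain rfl : (fun i => w i • p i) = v := funext hpv
  refine nonneg_of_mul_nonneg_right (two_mul_harcosGap_smul M w p ▸ ?_) two_pos
  exact Finset.sum_nonneg fun i _ => Finset.sum_nonneg fun j _ =>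
    mul_nonneg (mul_nonneg (hw₀ i) (hw₀ j))
      (harcosPairGap_nonneg ((hw₀ i).trans (hw i)) (hw i) (hw j) (hp i) (hp j))

lemma harcosGap_smul_eq_zero_iff {M : ℝ} {w : ι → ℝ} {p : ι → E} (hw₀ : ∀ i, 0 < w i)
    (hw : ∀ i, w i ≤ M) (hp : ∀ i, ‖p i‖ ≤ 1) :
    harcosGap M w (fun i => w i • p i) = 0 ↔
      (∀ i j, p i = p j) ∧ ∀ i, w i = M ∨ ‖p i‖ = 1 := by
  have hM i : 0 < M := (hw₀ i).trans_le (hw i)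
  have hterm i j : 0 ≤ w i * w j * harcosPairGap M (w i) (w j) (p i) (p j) :=
    mul_nonneg (mul_pos (hw₀ i) (hw₀ j)).le
      (harcosPairGap_nonneg (hM i).le (hw i) (hw j) (hp i) (hp j))
  have hterm_iff i j : w i * w j * harcosPairGap M (w i) (w j) (p i) (p j) = 0 ↔
      p i = p j ∧ (w i = M ∨ ‖p i‖ = 1) ∧ (w j = M ∨ ‖p j‖ = 1) := by
    rw [mul_eq_zero_iff_left (mul_pos (hw₀ i) (hw₀ j)).ne',
      harcosPairGap_eq_zero_iff (hM i) (hw i) (hw j) (hp i) (hp j)]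
  rw [← mul_eq_zero_iff_left two_ne_zero, two_mul_harcosGap_smul,
    Fintype.sum_eq_zero_iff_of_nonneg fun i => Finset.sum_nonneg fun j _ => hterm i j]
  simp only [funext_iff, Pi.zero_apply,
    Finset.sum_eq_zero_iff_of_nonneg fun j _ => hterm _ j, Finset.mem_univ, true_imp_iff, hterm_iff]
  exact ⟨fun h => ⟨fun i j => (h i j).1, fun i => (h i i).2.1⟩,
    fun h i j => ⟨h.1 i j, h.2 i, h.2 j⟩⟩

theorem harcosGap_eq_zero_iff {M : ℝ} {w : ι → ℝ} {v : ι → E} (hw₀ : ∀ i, 0 < w i)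
    (hv : ∀ i, ‖v i‖ ≤ w i) (hw : ∀ i, w i ≤ M) :
    harcosGap M w v = 0 ↔
      (∀ i j, w j • v i = w i • v j) ∧ ∀ i, w i = M ∨ ‖v i‖ = w i := by
  choose p hp hpv using fun i => exists_smul_eq_of_norm_le (hv i)
  obtain rfl : (fun i => w i • p i) = v := funext hpv
  have hproportional i j : w j • w i • p i = w i • w j • p j ↔ p i = p j := by
    rw [smul_comm, smul_right_inj (hw₀ i).ne', smul_right_inj (hw₀ j).ne']
  have hnorm i : ‖w i • p i‖ = w i ↔ ‖p i‖ = 1 := by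
    rw [norm_smul, Real.norm_of_nonneg (hw₀ i).le, mul_eq_left₀ (hw₀ i).ne']
  simp only [hproportional, hnorm, harcosGap_smul_eq_zero_iff hw₀ hw hp]

end InnerProductSpace

section Matrix

variable {ι κ : Type*} [Fintype κ]

lemma norm_toLp_two_le_sum {u : κ → ℝ} (hu : ∀ k, 0 ≤ u k) : ‖WithLp.toLp 2 u‖ ≤ ∑ k, u k := by
  refine le_of_sq_le_sq ?_ (Finset.sum_nonneg fun k _ => hu k)
  rw [EuclideanSpace.real_norm_sq_eq]
  exact Finset.sum_sq_le_sq_sum_of_nonneg fun k _ => hu k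

lemma exists_forall_ne_eq_zero_of_norm_toLp_two_eq_sum {u : κ → ℝ} (hu : ∀ k, 0 ≤ u k)
    (hpos : 0 < ∑ k, u k) (h : ‖WithLp.toLp 2 u‖ = ∑ k, u k) : ∃ l, ∀ k, k ≠ l → u k = 0 := by
  classical
  have hle k : u k ≤ ∑ k, u k := Finset.single_le_sum (fun k _ => hu k) (Finset.mem_univ k)
  have hsum : ∑ k, u k * (∑ k, u k - u k) = 0 := by
    have hsq : ∑ k, u k ^ 2 = (∑ k, u k) ^ 2 := by rw [← h, EuclideanSpace.real_norm_sq_eq]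
    simp only [mul_sub, Finset.sum_sub_distrib, ← Finset.sum_mul, ← sq, hsq, sub_self]
  obtain ⟨l, -, hl⟩ := (Finset.sum_pos_iff_of_nonneg fun k _ => hu k).1 hpos
  have hl_eq : u l = ∑ k, u k := by
    have hzero := (Finset.sum_eq_zero_iff_of_nonneg
      fun k _ => mul_nonneg (hu k) (sub_nonneg.2 (hle k))).1 hsum l (Finset.mem_univ l)
    exact (sub_eq_zero.1 ((mul_eq_zero_iff_left hl.ne').1 hzero)).symm
  refine ⟨l, fun k hkl => (hu k).antisymm' ?_⟩
  have hpair : u k + u l ≤ ∑ k, u k := Finset.sum_pair (f := u) hkl ▸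
    Finset.sum_le_univ_sum_of_nonneg hu
  linarith

lemma norm_toLp_two_eq_sum_of_forall_ne_eq_zero {u : κ → ℝ} (hu : ∀ k, 0 ≤ u k) {l : κ}
    (hl : ∀ k, k ≠ l → u k = 0) : ‖WithLp.toLp 2 u‖ = ∑ k, u k := by
  rw [← sq_eq_sq₀ (norm_nonneg _) (Finset.sum_nonneg fun k _ => hu k),
    EuclideanSpace.real_norm_sq_eq, Fintype.sum_eq_single l hl,
    Fintype.sum_eq_single l fun k hk => by rw [PiLp.toLp_apply, hl k hk, sq, zero_mul]]

lemma proportional_rows_iff_equal_rows_or_single_column {M : ℝ} {x : ι → κ → ℝ} {c : ι → ℝ}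
    (hx : ∀ i k, 0 ≤ x i k) (hc : ∀ i, c i = ∑ k, x i k) (hpos : ∀ i, 0 < c i) :
    ((∀ i j k, c j * x i k = c i * x j k) ∧ ∀ i, c i = M ∨ ‖WithLp.toLp 2 (x i)‖ = c i) ↔
      ((∀ i j k, x i k = x j k) ∧ ∀ i, c i = M) ∨ ∃ l, ∀ i k, k ≠ l → x i k = 0 := by
  constructor
  · rintro ⟨hprop, hor⟩
    by_cases hM : ∀ i, c i = M
    · refine .inl ⟨fun i j k => mul_left_cancel₀ (hpos i).ne' ?_, hM⟩
      rw [← hprop i j k, hM i, hM j]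
    · obtain ⟨i₀, hi₀⟩ := not_forall.1 hM
      obtain ⟨l, hl⟩ := exists_forall_ne_eq_zero_of_norm_toLp_two_eq_sum (hx i₀) (hc i₀ ▸ hpos i₀)
        (hc i₀ ▸ (hor i₀).resolve_left hi₀)
      refine .inr ⟨l, fun i k hk => (mul_eq_zero_iff_left (hpos i₀).ne').1 ?_⟩
      rw [hprop i i₀ k, hl k hk, mul_zero]
  · rintro (⟨hrow, hM⟩ | ⟨l, hl⟩)
    · exact ⟨fun i j k => by rw [hM i, hM j, hrow i j k], fun i => .inl (hM i)⟩
    · refine ⟨fun i j k => ?_, fun i => .inr ?_⟩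
      · rcases eq_or_ne k l with rfl | hk
        · rw [hc i, hc j, Fintype.sum_eq_single k (hl i), Fintype.sum_eq_single k (hl j), mul_comm]
        · rw [hl i k hk, hl j k hk, mul_zero, mul_zero]
      · rw [hc i, norm_toLp_two_eq_sum_of_forall_ne_eq_zero (hx i) (hl i)]

variable [Fintype ι]

lemma harcosGap_toLp_two (M : ℝ) (c : ι → ℝ) (x : ι → κ → ℝ) :
    harcosGap M c (fun i => WithLp.toLp 2 (x i)) =
      (M * (∑ i, c i) ^ 2 - (∑ i, c i) * ∑ i, c i ^ 2) -
        (M * ∑ k, (∑ i, x i k) ^ 2 - (∑ i, c i) * ∑ i, ∑ k, x i k ^ 2) := by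
  simp only [harcosGap, EuclideanSpace.real_norm_sq_eq, WithLp.ofLp_sum, Finset.sum_apply]

theorem stmt_0_general {M : ℝ} {x : ι → κ → ℝ} {c : ι → ℝ} (hx : ∀ i k, 0 ≤ x i k)
    (hc : ∀ i, c i = ∑ k, x i k) (hM : ∀ i, c i ≤ M) :
    M * (∑ k, (∑ i, x i k) ^ 2) - (∑ i, c i) * (∑ i, ∑ k, (x i k) ^ 2) ≤
        M * (∑ i, c i) ^ 2 - (∑ i, c i) * (∑ i, (c i) ^ 2) ∧
    ((∀ i, 0 < c i) →
      (M * (∑ k, (∑ i, x i k) ^ 2) - (∑ i, c i) * (∑ i, ∑ k, (x i k) ^ 2) =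
          M * (∑ i, c i) ^ 2 - (∑ i, c i) * (∑ i, (c i) ^ 2) ↔
        ((∀ i j k, x i k = x j k) ∧ ∀ i, c i = M) ∨ ∃ l, ∀ i k, k ≠ l → x i k = 0)) := by
  have hnorm i : ‖WithLp.toLp 2 (x i)‖ ≤ c i := hc i ▸ norm_toLp_two_le_sum (hx i)
  constructor
  · rw [← sub_nonneg, ← harcosGap_toLp_two]
    exact harcosGap_nonneg hnorm hM
  · intro hpos
    rw [eq_comm, ← sub_eq_zero, ← harcosGap_toLp_two, harcosGap_eq_zero_iff hpos hnorm hM,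
      ← proportional_rows_iff_equal_rows_or_single_column hx hc hpos]
    simp only [← WithLp.toLp_smul, (WithLp.toLp_injective 2).eq_iff, funext_iff, Pi.smul_apply,
      smul_eq_mul]

end Matrix

/-- Harcos' inequality (Appendix): for nonnegative reals `x i k` with row sums
`c i = Σ_k x i k` and `c = max_i c i`,
`c·Σ_k (Σ_i x i k)² − (Σ_i c i)·Σ_{i,k} x i k² ≤ c·(Σ_i c i)² − (Σ_i c i)·Σ_i c i²`,
and, assuming `min_i c i > 0`, equality holds iff all rows are equal or all columns
but one vanish. -/
theorem stmt_0 (n r : ℕ) (hn : 0 < n) (hr : 0 < r)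
    (x : Fin n → Fin r → ℝ) (hx : ∀ i k, 0 ≤ x i k)
    (c : Fin n → ℝ) (hc : ∀ i, c i = ∑ k, x i k)
    (cm : ℝ) (hcm : IsGreatest (Set.range c) cm) :
    cm * (∑ k, (∑ i, x i k) ^ 2) - (∑ i, c i) * (∑ i, ∑ k, (x i k) ^ 2) ≤
        cm * (∑ i, c i) ^ 2 - (∑ i, c i) * (∑ i, (c i) ^ 2) ∧
    ((∀ i, 0 < c i) →
      (cm * (∑ k, (∑ i, x i k) ^ 2) - (∑ i, c i) * (∑ i, ∑ k, (x i k) ^ 2) =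
          cm * (∑ i, c i) ^ 2 - (∑ i, c i) * (∑ i, (c i) ^ 2) ↔
        (∀ i j k, x i k = x j k) ∨ ∃ l, ∀ i k, k ≠ l → x i k = 0)) := by
  obtain ⟨hle, heq⟩ := stmt_0_general hx hc fun i => hcm.2 ⟨i, rfl⟩
  refine ⟨hle, fun hpos => (heq hpos).trans (or_congr_left (and_iff_left_of_imp fun hrow i => ?_))⟩
  obtain ⟨⟨i₀, rfl⟩, -⟩ := hcm
  rw [hc, hc, funext (hrow i i₀)]
end

section
/- Let ν¹,…,νˢ and μ be non-zero partitions such that ν¹,…,νˢ sum to μ up to permutation of parts. Then Σ_{p=1}^s σ_μ(νᵖ) ≤ σ_μ(μ), and equality holds if and only if either (i) s = 1 and μ = ν¹, or (ii) ν¹,…,νˢ and μ are all rectangular partitions of the same length. -/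
/-- A partition of `n`: a weakly decreasing, eventually zero sequence of natural
numbers (0-indexed: `parts i` is `λ_{i+1}`) summing to `n`. -/
structure PartitionOf (n : ℕ) where
  parts : ℕ → ℕ
  antitone : ∀ ⦃i j : ℕ⦄, i ≤ j → parts j ≤ parts i
  eventually_zero : ∃ N, ∀ i, N ≤ i → parts i = 0
  sum_eq : ∑ᶠ i, parts i = n

/-- A partition is rectangular if all its (non-zero) parts are equal. -/
def Rectangular {n : ℕ} (lam : PartitionOf n) : Prop :=
  ∀ i j, lam.parts i ≠ 0 → lam.parts j ≠ 0 → lam.parts i = lam.parts j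

/-- The length (number of non-zero parts) of a partition. -/
noncomputable def partLength {n : ℕ} (lam : PartitionOf n) : ℕ :=
  Set.ncard {i | lam.parts i ≠ 0}

/-- `σ_μ(ν) := μ₁·|ν|² − |μ|·Σ_i νᵢ²` for `μ` a partition of `n` and `ν` of `m`. -/
noncomputable def sigmaAux {n m : ℕ} (μ : PartitionOf n) (ν : PartitionOf m) : ℤ :=
  (μ.parts 0 : ℤ) * (m : ℤ) ^ 2 - (n : ℤ) * ∑ᶠ i, (ν.parts i : ℤ) ^ 2

/-- `ν¹,…,νˢ` sum to `μ` up to permutation of parts: there are rearrangements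
`xᵖ` of the zero-padded part sequences of the `νᵖ` with `Σ_p xᵖᵢ = μᵢ` for all `i`. -/
def SumsToUpToPerm {s : ℕ} {m : Fin s → ℕ} {n : ℕ}
    (ν : ∀ p : Fin s, PartitionOf (m p)) (μ : PartitionOf n) : Prop :=
  ∃ x : Fin s → ℕ → ℕ,
    (∀ p, ∃ σ : Equiv.Perm ℕ, x p = (ν p).parts ∘ σ) ∧ ∀ i, ∑ p, x p i = μ.parts i

/-!
Polarise `σ_μ`: it is the quadratic form of `B(f, g) = μ₁ |f| |g| - |μ| ∑ᵢ fᵢ gᵢ`. If `μ = ∑ₚ xᵖ`,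
then `σ_μ(μ) - ∑ₚ σ_μ(xᵖ) = ∑ₚ B(xᵖ, μ - xᵖ)`, so it suffices to treat a splitting of `μ` into two
nonnegative sequences `f` and `g`. With `a = |f|` and `b = |g|`, summing over `i` the inequalities
`fᵢ gᵢ (a + b)² ≤ (fᵢ + gᵢ) (fᵢ b² + gᵢ a²) ≤ μ₁ (fᵢ b² + gᵢ a²)` gives `0 ≤ (a + b) B(f, g)`.
The first inequality is sharp iff `fᵢ b = gᵢ a`, and the second iff `fᵢ + gᵢ` is `0` or `μ₁`
(for positive `a` and `b`). Hence equality with at least two summands means that `μ` is rectangular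
and that every `xᵖ` is proportional to `μ`.
-/

section SigmaForm

variable {R ι κ : Type*} [CommRing R]

/-- The symmetric bilinear form `(f, g) ↦ M |f| |g| - N ∑ᵢ fᵢ gᵢ`, with all sums over `t`. For
`M = μ₁`, `N = |μ|` and `t` containing the support of `f`, its value at `(f, f)` is `σ_μ(f)`. -/
def sigmaForm (M N : R) (t : Finset ι) : LinearMap.BilinForm R (ι → R) :=
  LinearMap.mk₂ R (fun f g ↦ M * ((∑ i ∈ t, f i) * ∑ i ∈ t, g i) - N * ∑ i ∈ t, f i * g i)
    (fun f f' g ↦ by simp only [Pi.add_apply, add_mul, Finset.sum_add_distrib]; ring)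
    (fun c f g ↦ by
      simp only [Pi.smul_apply, smul_eq_mul, mul_assoc, ← Finset.mul_sum]; ring)
    (fun f g g' ↦ by simp only [Pi.add_apply, mul_add, Finset.sum_add_distrib]; ring)
    (fun c f g ↦ by
      simp only [Pi.smul_apply, smul_eq_mul, mul_left_comm _ c, ← Finset.mul_sum]; ring)

theorem sigmaForm_apply (M N : R) (t : Finset ι) (f g : ι → R) :
    sigmaForm M N t f g =
      M * ((∑ i ∈ t, f i) * ∑ i ∈ t, g i) - N * ∑ i ∈ t, f i * g i :=
  rfl

theorem bilinForm_sum_self_sub {V : Type*} [AddCommGroup V] [Module R V] [Fintype κ]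
    (B : LinearMap.BilinForm R V) {x : κ → V} {y : V} (hy : ∑ p, x p = y) :
    B y y - ∑ p, B (x p) (x p) = ∑ p, B (x p) (y - x p) := by
  subst hy
  simp only [map_sub, Finset.sum_sub_distrib, map_sum, LinearMap.sum_apply]
  rw [Finset.sum_comm]

theorem sum_add_mul_sigmaForm (M : R) (t : Finset ι) (f g : ι → R) :
    (∑ i ∈ t, (f i + g i)) * sigmaForm M (∑ i ∈ t, (f i + g i)) t f g =
      ∑ i ∈ t, (M * (f i * (∑ j ∈ t, g j) ^ 2 + g i * (∑ j ∈ t, f j) ^ 2) -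
        f i * g i * (∑ j ∈ t, f j + ∑ j ∈ t, g j) ^ 2) := by
  rw [sigmaForm_apply, Finset.sum_sub_distrib, ← Finset.mul_sum, ← Finset.sum_mul]
  simp only [Finset.sum_add_distrib, ← Finset.sum_mul]
  ring

theorem add_mul_mul_sq_add_mul_sq (x y a b : R) :
    (x + y) * (x * b ^ 2 + y * a ^ 2) = x * y * (a + b) ^ 2 + (x * b - y * a) ^ 2 := by
  ring

variable [LinearOrder R] [IsStrictOrderedRing R]

theorem mul_mul_add_sq_le {M x y : R} (a b : R) (hx : 0 ≤ x) (hy : 0 ≤ y) (hxy : x + y ≤ M) :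
    x * y * (a + b) ^ 2 ≤ M * (x * b ^ 2 + y * a ^ 2) :=
  calc
    x * y * (a + b) ^ 2 ≤ (x + y) * (x * b ^ 2 + y * a ^ 2) := by
      rw [add_mul_mul_sq_add_mul_sq]
      exact le_add_of_nonneg_right (sq_nonneg _)
    _ ≤ M * (x * b ^ 2 + y * a ^ 2) := by gcongr

theorem mul_mul_add_sq_eq_iff {M x y a b : R} (ha : 0 < a) (hb : 0 < b)
    (hx : 0 ≤ x) (hy : 0 ≤ y) (hxy : x + y ≤ M) :
    x * y * (a + b) ^ 2 = M * (x * b ^ 2 + y * a ^ 2) ↔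
      x * b = y * a ∧ (x + y = 0 ∨ x + y = M) := by
  have weighted_nonneg : 0 ≤ x * b ^ 2 + y * a ^ 2 := by positivity
  have weighted_eq_zero_iff : x * b ^ 2 + y * a ^ 2 = 0 ↔ x + y = 0 := by
    rw [add_eq_zero_iff_of_nonneg (by positivity) (by positivity),
      add_eq_zero_iff_of_nonneg hx hy]
    simp [ha.ne', hb.ne']
  have gap_eq : M * (x * b ^ 2 + y * a ^ 2) - x * y * (a + b) ^ 2 =
      (x * b - y * a) ^ 2 + (M - (x + y)) * (x * b ^ 2 + y * a ^ 2) := by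
    linear_combination add_mul_mul_sq_add_mul_sq x y a b
  rw [eq_comm, ← sub_eq_zero, gap_eq, add_eq_zero_iff_of_nonneg (sq_nonneg _)
    (mul_nonneg (sub_nonneg.2 hxy) weighted_nonneg), sq_eq_zero_iff, sub_eq_zero, mul_eq_zero,
    sub_eq_zero, weighted_eq_zero_iff, or_comm, eq_comm (a := M)]

section TwoSummands

variable {M : R} {t : Finset ι} {f g : ι → R}

theorem sigmaForm_nonneg (hf : ∀ i ∈ t, 0 ≤ f i) (hg : ∀ i ∈ t, 0 ≤ g i)
    (hfg : ∀ i ∈ t, f i + g i ≤ M) : 0 ≤ sigmaForm M (∑ i ∈ t, (f i + g i)) t f g := by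
  have gap_nonneg := Finset.sum_nonneg fun i hi ↦
    sub_nonneg.2 (mul_mul_add_sq_le (∑ j ∈ t, f j) (∑ j ∈ t, g j) (hf i hi) (hg i hi) (hfg i hi))
  rw [← sum_add_mul_sigmaForm] at gap_nonneg
  have total_nonneg := Finset.sum_nonneg fun i hi ↦ add_nonneg (hf i hi) (hg i hi)
  rcases total_nonneg.eq_or_lt with total_eq_zero | total_pos
  · rw [← total_eq_zero, sigmaForm_apply, zero_mul, sub_zero]
    have f_eq_zero : ∑ i ∈ t, f i = 0 := by
      have := Finset.sum_nonneg hf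
      have := Finset.sum_nonneg hg
      rw [Finset.sum_add_distrib] at total_eq_zero
      linarith
    simp [f_eq_zero]
  · exact nonneg_of_mul_nonneg_right gap_nonneg total_pos

theorem sigmaForm_eq_zero_iff (hf : ∀ i ∈ t, 0 ≤ f i) (hg : ∀ i ∈ t, 0 ≤ g i)
    (hfg : ∀ i ∈ t, f i + g i ≤ M) (hf_pos : 0 < ∑ i ∈ t, f i) (hg_pos : 0 < ∑ i ∈ t, g i) :
    sigmaForm M (∑ i ∈ t, (f i + g i)) t f g = 0 ↔
      ∀ i ∈ t, f i * ∑ j ∈ t, g j = g i * ∑ j ∈ t, f j ∧ (f i + g i = 0 ∨ f i + g i = M) := by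
  have total_ne_zero : ∑ i ∈ t, (f i + g i) ≠ 0 := by
    rw [Finset.sum_add_distrib]
    exact (add_pos hf_pos hg_pos).ne'
  rw [← mul_eq_zero_iff_left total_ne_zero, sum_add_mul_sigmaForm,
    Finset.sum_eq_zero_iff_of_nonneg fun i hi ↦
      sub_nonneg.2 (mul_mul_add_sq_le _ _ (hf i hi) (hg i hi) (hfg i hi))]
  exact forall₂_congr fun i hi ↦ sub_eq_zero.trans <| eq_comm.trans <|
    mul_mul_add_sq_eq_iff hf_pos hg_pos (hf i hi) (hg i hi) (hfg i hi)

end TwoSummands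

section Family

variable [Fintype κ] {M N : R} {t : Finset ι} {x : κ → ι → R} {y : ι → R}

theorem apply_le_of_sum_eq (hy : ∑ p, x p = y) (hx : ∀ p, ∀ i ∈ t, 0 ≤ x p i) (p : κ) {i : ι}
    (hi : i ∈ t) : x p i ≤ y i := by
  rw [← hy, Finset.sum_apply]
  exact Finset.single_le_sum (f := fun q ↦ x q i) (fun q _ ↦ hx q i hi) (Finset.mem_univ p)

theorem sigmaForm_sub_nonneg (hy : ∑ p, x p = y) (hN : ∑ i ∈ t, y i = N)
    (hx : ∀ p, ∀ i ∈ t, 0 ≤ x p i) (hM : ∀ i ∈ t, y i ≤ M) (p : κ) :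
    0 ≤ sigmaForm M N t (x p) (y - x p) := by
  simpa [hN] using sigmaForm_nonneg (g := y - x p) (hx p)
    (fun i hi ↦ sub_nonneg.2 (apply_le_of_sum_eq hy hx p hi)) (by simpa using hM)

theorem sum_sigmaForm_self_le (hy : ∑ p, x p = y) (hN : ∑ i ∈ t, y i = N)
    (hx : ∀ p, ∀ i ∈ t, 0 ≤ x p i) (hM : ∀ i ∈ t, y i ≤ M) :
    ∑ p, sigmaForm M N t (x p) (x p) ≤ sigmaForm M N t y y := by
  rw [← sub_nonneg, bilinForm_sum_self_sub _ hy]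
  exact Finset.sum_nonneg fun p _ ↦ sigmaForm_sub_nonneg hy hN hx hM p

theorem sigmaForm_sub_eq_zero_iff [Nontrivial κ] (hy : ∑ p, x p = y) (hN : ∑ i ∈ t, y i = N)
    (hx : ∀ p, ∀ i ∈ t, 0 ≤ x p i) (hM : ∀ i ∈ t, y i ≤ M) (hpos : ∀ p, 0 < ∑ i ∈ t, x p i)
    (p : κ) :
    sigmaForm M N t (x p) (y - x p) = 0 ↔
      ∀ i ∈ t, x p i * N = (∑ j ∈ t, x p j) * y i ∧ (y i = 0 ∨ y i = M) := by
  have rest_pos : 0 < ∑ i ∈ t, (y - x p) i := by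
    obtain ⟨q, hqp⟩ := exists_ne p
    simp only [← hy, Pi.sub_apply, Finset.sum_sub_distrib, Finset.sum_apply, sub_pos]
    rw [Finset.sum_comm]
    exact Finset.single_lt_sum (f := fun r ↦ ∑ i ∈ t, x r i) hqp (Finset.mem_univ p)
      (Finset.mem_univ q) (hpos q) fun r _ _ ↦ (hpos r).le
  have zero_iff := sigmaForm_eq_zero_iff (M := M) (g := y - x p) (hx p)
    (fun i hi ↦ sub_nonneg.2 (apply_le_of_sum_eq hy hx p hi)) (by simpa using hM) (hpos p) rest_pos
  simp only [Pi.sub_apply, add_sub_cancel, Finset.sum_sub_distrib, hN] at zero_iff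
  rw [zero_iff]
  refine forall₂_congr fun i _ ↦ and_congr_left' ?_
  rw [mul_sub, sub_mul, sub_left_inj, mul_comm (y i)]

theorem sum_sigmaForm_self_eq_iff [Nontrivial κ] (hy : ∑ p, x p = y) (hN : ∑ i ∈ t, y i = N)
    (hx : ∀ p, ∀ i ∈ t, 0 ≤ x p i) (hM : ∀ i ∈ t, y i ≤ M) (hpos : ∀ p, 0 < ∑ i ∈ t, x p i) :
    ∑ p, sigmaForm M N t (x p) (x p) = sigmaForm M N t y y ↔
      (∀ i ∈ t, y i = 0 ∨ y i = M) ∧ ∀ p, ∀ i ∈ t, x p i * N = (∑ j ∈ t, x p j) * y i := by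
  rw [eq_comm, ← sub_eq_zero, bilinForm_sum_self_sub _ hy,
    Finset.sum_eq_zero_iff_of_nonneg fun p _ ↦ sigmaForm_sub_nonneg hy hN hx hM p]
  simp only [Finset.mem_univ, forall_const, sigmaForm_sub_eq_zero_iff hy hN hx hM hpos, forall_and]
  exact and_comm

end Family

end SigmaForm

section Rearrangement

theorem comp_perm_le_of_antitone {α β : Type*} [LinearOrder α] [LocallyFiniteOrderBot α]
    [LinearOrder β] {f : α → β} {σ : Equiv.Perm α} (hf : Antitone f) (hfσ : Antitone (f ∘ σ)) :
    f ∘ σ ≤ f := by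
  intro i
  by_contra! lt_apply
  have maps_Iic_to_Iio : ∀ j ∈ Finset.Iic i, σ j ∈ Finset.Iio i := fun j hj ↦
    Finset.mem_Iio.2 <| hf.reflect_lt <| lt_apply.trans_le <| hfσ <| Finset.mem_Iic.1 hj
  have card_le := Finset.card_le_card_of_injOn σ maps_Iic_to_Iio σ.injective.injOn
  exact card_le.not_gt <| Finset.card_lt_card <|
    (Finset.ssubset_iff_of_subset Finset.Iio_subset_Iic_self).2 ⟨i, by simp⟩

theorem comp_perm_eq_of_antitone {α β : Type*} [LinearOrder α] [LocallyFiniteOrderBot α]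
    [LinearOrder β] {f : α → β} {σ : Equiv.Perm α} (hf : Antitone f) (hfσ : Antitone (f ∘ σ)) :
    f ∘ σ = f := by
  have comp_inv : (f ∘ σ) ∘ σ.symm = f := by simp [Function.comp_assoc]
  have le_comp := comp_perm_le_of_antitone (σ := σ.symm) hfσ (by rwa [comp_inv])
  exact (comp_perm_le_of_antitone hf hfσ).antisymm (by rwa [comp_inv] at le_comp)

theorem finsum_comp_eq_sum_comp_perm {α β γ : Type*} [Zero β] [AddCommMonoid γ] {F : β → γ}
    (hF : F 0 = 0) {f : α → β} {σ : Equiv.Perm α} {t : Finset α}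
    (ht : Function.support (f ∘ σ) ⊆ t) : ∑ᶠ i, F (f i) = ∑ i ∈ t, F (f (σ i)) := by
  rw [← finsum_comp_equiv σ]
  exact finsum_eq_sum_of_support_subset _ ((Function.support_comp_subset hF (f ∘ σ)).trans ht)

end Rearrangement

namespace PartitionOf

variable {m n : ℕ}

theorem support_finite (lam : PartitionOf n) : (Function.support lam.parts).Finite := by
  obtain ⟨N, hN⟩ := lam.eventually_zero
  refine (Set.finite_Iio N).subset fun i hi ↦ ?_
  by_contra hNi
  exact hi (hN i (not_lt.1 hNi))

theorem rectangular_iff_eq_zero_or_eq_head (lam : PartitionOf n) :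
    Rectangular lam ↔ ∀ i, lam.parts i = 0 ∨ lam.parts i = lam.parts 0 := by
  refine ⟨fun h i ↦ or_iff_not_imp_left.2 fun hi ↦ h i 0 hi fun h₀ ↦ ?_, fun h i j hi hj ↦ ?_⟩
  · exact hi (Nat.le_zero.1 (h₀ ▸ lam.antitone i.zero_le))
  · rw [(h i).resolve_left hi, (h j).resolve_left hj]

theorem size_eq_partLength_mul {lam : PartitionOf n} (h : Rectangular lam) :
    n = partLength lam * lam.parts 0 := by
  have part_eq : ∀ i ∈ lam.support_finite.toFinset, lam.parts i = lam.parts 0 := fun i hi ↦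
    ((rectangular_iff_eq_zero_or_eq_head lam).1 h i).resolve_left (by simpa using hi)
  calc
    n = ∑ i ∈ lam.support_finite.toFinset, lam.parts i := by
      rw [← finsum_eq_sum lam.parts lam.support_finite, lam.sum_eq]
    _ = lam.support_finite.toFinset.card * lam.parts 0 := Finset.sum_const_nat part_eq
    _ = partLength lam * lam.parts 0 := by
      rw [← Set.ncard_eq_toFinset_card _ lam.support_finite]; rfl

theorem partLength_eq_ncard_comp_perm (lam : PartitionOf n) (σ : Equiv.Perm ℕ) :
    partLength lam = {i | lam.parts (σ i) ≠ 0}.ncard :=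
  (Set.ncard_preimage_of_injective_subset_range σ.injective (by simp)).symm

section Proportional

variable {ν : PartitionOf m} {μ : PartitionOf n} {σ : Equiv.Perm ℕ}

theorem rectangular_and_partLength_eq_of_proportional (hm : m ≠ 0) (hn : n ≠ 0)
    (hμ : Rectangular μ) (h : ∀ i, ν.parts (σ i) * n = m * μ.parts i) :
    Rectangular ν ∧ partLength ν = partLength μ := by
  have eq_zero_iff : ∀ i, ν.parts (σ i) = 0 ↔ μ.parts i = 0 := fun i ↦ by
    rw [← mul_eq_zero_iff_right hn, h, mul_eq_zero_iff_left hm]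
  constructor
  · intro i j hi hj
    obtain ⟨i, rfl⟩ := σ.surjective i
    obtain ⟨j, rfl⟩ := σ.surjective j
    have μ_eq := hμ i j (mt (eq_zero_iff i).2 hi) (mt (eq_zero_iff j).2 hj)
    exact mul_right_cancel₀ hn (by rw [h, h, μ_eq])
  · simp only [ν.partLength_eq_ncard_comp_perm σ, ne_eq, eq_zero_iff]
    rfl

theorem proportional_of_rectangular (hνμ : ∀ i, ν.parts (σ i) ≤ μ.parts i)
    (hν : Rectangular ν) (hμ : Rectangular μ) (hlen : partLength ν = partLength μ) (i : ℕ) :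
    ν.parts (σ i) * n = m * μ.parts i := by
  have support_eq : {i | ν.parts (σ i) ≠ 0} = {i | μ.parts i ≠ 0} := by
    refine Set.eq_of_subset_of_ncard_le (fun i hi hμi ↦ hi ?_) ?_ μ.support_finite
    · exact Nat.le_zero.1 (hμi ▸ hνμ i)
    · rw [← partLength_eq_ncard_comp_perm, hlen, partLength]
  by_cases hμi : μ.parts i = 0
  · have hνi : ν.parts (σ i) = 0 := Nat.le_zero.1 (hμi ▸ hνμ i)
    rw [hμi, hνi, zero_mul, mul_zero]
  · have hνi : ν.parts (σ i) ≠ 0 := support_eq.ge hμi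
    rw [((rectangular_iff_eq_zero_or_eq_head ν).1 hν _).resolve_left hνi,
      ((rectangular_iff_eq_zero_or_eq_head μ).1 hμ _).resolve_left hμi]
    conv_lhs => rw [size_eq_partLength_mul hμ]
    conv_rhs => rw [size_eq_partLength_mul hν, hlen]
    ring

end Proportional

theorem size_eq_sum_comp_perm {ν : PartitionOf m} {σ : Equiv.Perm ℕ} {t : Finset ℕ}
    (ht : Function.support (ν.parts ∘ σ) ⊆ t) : (m : ℤ) = ∑ i ∈ t, (ν.parts (σ i) : ℤ) := by
  have size_eq := finsum_comp_eq_sum_comp_perm (F := id) rfl ht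
  exact_mod_cast ν.sum_eq.symm.trans size_eq

theorem sigmaAux_eq_sigmaForm (μ : PartitionOf n) {ν : PartitionOf m} {σ : Equiv.Perm ℕ}
    {t : Finset ℕ} (ht : Function.support (ν.parts ∘ σ) ⊆ t) :
    sigmaAux μ ν = sigmaForm (μ.parts 0 : ℤ) n t
      (fun i ↦ (ν.parts (σ i) : ℤ)) (fun i ↦ (ν.parts (σ i) : ℤ)) := by
  rw [sigmaAux, sigmaForm_apply, ← size_eq_sum_comp_perm ht,
    finsum_comp_eq_sum_comp_perm (F := fun k : ℕ ↦ (k : ℤ) ^ 2) (by simp) ht]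
  simp only [sq]

section Sum

variable {κ : Type*} [Fintype κ] {m : κ → ℕ} {ν : ∀ p, PartitionOf (m p)} {μ : PartitionOf n}
  {σ : κ → Equiv.Perm ℕ}

theorem parts_comp_perm_le (hsum : ∀ i, ∑ p, (ν p).parts (σ p i) = μ.parts i) (p : κ) (i : ℕ) :
    (ν p).parts (σ p i) ≤ μ.parts i :=
  hsum i ▸ Finset.single_le_sum_of_canonicallyOrdered (f := fun q ↦ (ν q).parts (σ q i))
    (Finset.mem_univ p)

theorem support_comp_perm_subset (hsum : ∀ i, ∑ p, (ν p).parts (σ p i) = μ.parts i) (p : κ) :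
    Function.support ((ν p).parts ∘ σ p) ⊆ μ.support_finite.toFinset := by
  intro i hi
  rw [Set.Finite.coe_toFinset]
  exact fun hμi ↦ hi (Nat.le_zero.1 (hμi ▸ parts_comp_perm_le hsum p i))

theorem sum_cast_parts_comp_perm (hsum : ∀ i, ∑ p, (ν p).parts (σ p i) = μ.parts i) :
    ∑ p, (fun i ↦ ((ν p).parts (σ p i) : ℤ)) = fun i ↦ (μ.parts i : ℤ) := by
  ext i
  rw [Finset.sum_apply, ← hsum, Nat.cast_sum]

theorem sum_sigmaAux_le (hsum : ∀ i, ∑ p, (ν p).parts (σ p i) = μ.parts i) :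
    ∑ p, sigmaAux μ (ν p) ≤ sigmaAux μ μ := by
  have hμ : Function.support (μ.parts ∘ Equiv.refl ℕ) ⊆ μ.support_finite.toFinset := by simp
  rw [sigmaAux_eq_sigmaForm μ hμ]
  simp only [sigmaAux_eq_sigmaForm μ (support_comp_perm_subset hsum _)]
  exact sum_sigmaForm_self_le (sum_cast_parts_comp_perm hsum) (size_eq_sum_comp_perm hμ).symm
    (fun _ _ _ ↦ Nat.cast_nonneg _) (fun i _ ↦ Nat.cast_le.2 (μ.antitone i.zero_le))

theorem sum_sigmaAux_eq_iff_proportional [Nontrivial κ] (hm : ∀ p, m p ≠ 0)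
    (hsum : ∀ i, ∑ p, (ν p).parts (σ p i) = μ.parts i) :
    ∑ p, sigmaAux μ (ν p) = sigmaAux μ μ ↔
      Rectangular μ ∧ ∀ p i, (ν p).parts (σ p i) * n = m p * μ.parts i := by
  have hμ : Function.support (μ.parts ∘ Equiv.refl ℕ) ⊆ μ.support_finite.toFinset := by simp
  have size_eq p := size_eq_sum_comp_perm (support_comp_perm_subset hsum p)
  rw [sigmaAux_eq_sigmaForm μ hμ]
  simp only [sigmaAux_eq_sigmaForm μ (support_comp_perm_subset hsum _)]
  refine (sum_sigmaForm_self_eq_iff (sum_cast_parts_comp_perm hsum)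
    (size_eq_sum_comp_perm hμ).symm (fun _ _ _ ↦ Nat.cast_nonneg _)
    (fun i _ ↦ Nat.cast_le.2 (μ.antitone i.zero_le))
    (fun p ↦ size_eq p ▸ Nat.cast_pos.2 (Nat.pos_of_ne_zero (hm p)))).trans ?_
  simp only [← size_eq, rectangular_iff_eq_zero_or_eq_head]
  norm_cast
  refine and_congr (forall_congr' fun i ↦ ?_) (forall₂_congr fun p i ↦ ?_)
  · simp +contextual [or_iff_not_imp_left]
  · refine ⟨fun h ↦ ?_, fun h _ ↦ h⟩
    by_cases hi : μ.parts i = 0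
    · have hνi : (ν p).parts (σ p i) = 0 := Nat.le_zero.1 (hi ▸ parts_comp_perm_le hsum p i)
      rw [hi, hνi, zero_mul, mul_zero]
    · exact h (by simpa using hi)

theorem sum_sigmaAux_eq_iff_rectangular [Nontrivial κ] (hm : ∀ p, m p ≠ 0) (hn : n ≠ 0)
    (hsum : ∀ i, ∑ p, (ν p).parts (σ p i) = μ.parts i) :
    ∑ p, sigmaAux μ (ν p) = sigmaAux μ μ ↔
      (∀ p, Rectangular (ν p)) ∧ Rectangular μ ∧ ∀ p, partLength (ν p) = partLength μ := by
  rw [sum_sigmaAux_eq_iff_proportional hm hsum, and_left_comm, ← forall_and]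
  refine and_congr_right fun hμ ↦ forall_congr' fun p ↦ ?_
  exact ⟨rectangular_and_partLength_eq_of_proportional (hm p) hn hμ, fun h ↦
    proportional_of_rectangular (parts_comp_perm_le hsum p) h.1 hμ h.2⟩

end Sum

theorem parts_eq_of_comp_perm {ν : PartitionOf m} {μ : PartitionOf n} {σ : Equiv.Perm ℕ}
    (h : ν.parts ∘ σ = μ.parts) : ν.parts = μ.parts :=
  (comp_perm_eq_of_antitone ν.antitone (h ▸ μ.antitone)).symm.trans h

theorem sigmaAux_eq_of_parts_eq {ν : PartitionOf m} {μ : PartitionOf n} (h : ν.parts = μ.parts) :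
    sigmaAux μ ν = sigmaAux μ μ := by
  obtain rfl : m = n := by rw [← ν.sum_eq, h, μ.sum_eq]
  rw [sigmaAux, sigmaAux, h]

end PartitionOf

/-- If the non-zero partitions `ν¹,…,νˢ` sum to the non-zero partition `μ` up to
permutation of parts, then `Σ_p σ_μ(νᵖ) ≤ σ_μ(μ)`, with equality iff either `s = 1`
and `μ = ν¹`, or all of `ν¹,…,νˢ, μ` are rectangular of the same length. -/
theorem stmt_3 (s : ℕ) (hs : 1 ≤ s) (m : Fin s → ℕ) (hm : ∀ p, 1 ≤ m p)
    (n : ℕ) (hn : 1 ≤ n) (ν : ∀ p, PartitionOf (m p)) (μ : PartitionOf n)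
    (hsum : SumsToUpToPerm ν μ) :
    ∑ p, sigmaAux μ (ν p) ≤ sigmaAux μ μ ∧
    (∑ p, sigmaAux μ (ν p) = sigmaAux μ μ ↔
      (s = 1 ∧ ∀ p, (ν p).parts = μ.parts) ∨
      ((∀ p, Rectangular (ν p)) ∧ Rectangular μ ∧
        ∀ p, partLength (ν p) = partLength μ)) := by
  obtain ⟨x, hx, hsum⟩ := hsum
  choose σ hσ using hx
  simp only [hσ, Function.comp_apply] at hsum
  refine ⟨PartitionOf.sum_sigmaAux_le hsum, ?_⟩
  rcases hs.eq_or_lt with rfl | one_lt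
  · have parts_eq : ∀ p, (ν p).parts = μ.parts := fun p ↦ by
      refine PartitionOf.parts_eq_of_comp_perm (σ := σ p) (funext fun i ↦ ?_)
      rw [← hsum, Fin.sum_univ_one, Subsingleton.elim p 0, Function.comp_apply]
    simp [parts_eq, PartitionOf.sigmaAux_eq_of_parts_eq]
  · have : Nontrivial (Fin s) := Fin.nontrivial_iff_two_le.2 one_lt
    rw [PartitionOf.sum_sigmaAux_eq_iff_rectangular (fun p ↦ Nat.one_le_iff_ne_zero.1 (hm p))
      (Nat.one_le_iff_ne_zero.1 hn) hsum]
    simp [one_lt.ne']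
end

section
/- Fix a partition μ = (μ₁,…,μᵣ) of n with r parts. For every tuple (ν¹,…,νʳ) with νᵖ a partition of μ_p for each p, one has μ₁·‖Σ_p νᵖ‖² − n·Σ_p ‖νᵖ‖² ≤ μ₁·n² − n·‖μ‖². Equality holds if and only if either (i) μ is rectangular and all the partitions νᵖ are equal, or (ii) νᵖ = (μ_p) (the one-part partition) for each p = 1,…,r. -/
/-! Write `B(x, y) = ∑_{i ≠ j} xᵢ yⱼ` and let `|x|` be the sum of the entries of `x`. With `xₚ` the
vector of parts of `νᵖ`, the claim is `(∑ₚ |xₚ|) ∑ₚ B(xₚ, xₚ) ≤ m B(∑ₚ xₚ, ∑ₚ xₚ)`, `m` being the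
largest part of `μ`. The difference of the two sides is half the sum over all `p, q` of
`2 m B(x, y) - |y| B(x, x) - |x| B(y, y)` at `x = xₚ`, `y = x_q`, and each of these terms is
nonnegative: if `|y| ≤ |x| ≤ m`, then multiplying it by `|y|` gives
`2 |y| (m - |x|) B(x, y) + ‖|y| x - |x| y‖² + |x| (|x| - |y|) B(y, y)`.
In the equality case the middle square makes the `xₚ` proportional to each other, while the terms
with `p = q` give `|xₚ| = m` or `B(xₚ, xₚ) = 0`. The first alternative for all `p` makes the `xₚ`
equal; the second for a single `p` gives `B(∑ₚ xₚ, ∑ₚ xₚ) = 0` by proportionality, so the weakly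
decreasing vector `∑ₚ xₚ` has only one nonzero entry. -/

section CrossForm

variable {R ι κ : Type*} [CommRing R] [Fintype ι] [Fintype κ]

/-- The symmetric bilinear form `∑_{i ≠ j} xᵢ yⱼ`, written as the product of the sums of the entries
minus the dot product; see `crossForm_eq_sum_offDiag`. -/
def crossForm (x y : κ → R) : R :=
  (∑ i, x i) * ∑ i, y i - x ⬝ᵥ y

theorem crossForm_eq_sum_offDiag (x y : κ → R) :
    crossForm x y = ∑ ij ∈ (Finset.univ : Finset κ).offDiag, x ij.1 * y ij.2 := by
  classical
  rw [crossForm, Finset.sum_mul_sum, ← Finset.sum_product', ← Finset.diag_union_offDiag,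
    Finset.sum_union (Finset.disjoint_diag_offDiag _), Finset.sum_diag, dotProduct,
    add_sub_cancel_left]

theorem crossForm_comm (x y : κ → R) : crossForm x y = crossForm y x := by
  rw [crossForm, crossForm, mul_comm, dotProduct_comm]

theorem crossForm_smul_smul (c d : R) (x y : κ → R) :
    crossForm (c • x) (d • y) = c * d * crossForm x y := by
  simp only [crossForm, Pi.smul_apply, smul_eq_mul, ← Finset.mul_sum, smul_dotProduct,
    dotProduct_smul]
  ring

theorem crossForm_sum_sum (x : ι → κ → R) :
    crossForm (∑ p, x p) (∑ p, x p) = ∑ p, ∑ q, crossForm (x p) (x q) := by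
  have entries : ∑ i, (∑ p, x p) i = ∑ p, ∑ i, x p i := by
    simp only [Finset.sum_apply]
    exact Finset.sum_comm
  rw [crossForm, entries, Finset.sum_mul_sum, sum_dotProduct]
  simp only [crossForm, dotProduct_sum, Finset.sum_sub_distrib]

/-- The summand for the pair `x`, `y` in the symmetrised form of
`m B(∑ₚ xₚ, ∑ₚ xₚ) - (∑ₚ |xₚ|) ∑ₚ B(xₚ, xₚ)`, where `B` is `crossForm` and `|x|` is the sum of the
entries of `x`. -/
def pairDefect (m : R) (x y : κ → R) : R :=
  2 * m * crossForm x y - (∑ i, y i) * crossForm x x - (∑ i, x i) * crossForm y y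

theorem pairDefect_comm (m : R) (x y : κ → R) : pairDefect m x y = pairDefect m y x := by
  rw [pairDefect, pairDefect, crossForm_comm]
  ring

theorem sum_sum_pairDefect (m : R) (x : ι → κ → R) :
    ∑ p, ∑ q, pairDefect m (x p) (x q) =
      2 * (m * crossForm (∑ p, x p) (∑ p, x p) -
        (∑ p, ∑ i, x p i) * ∑ p, crossForm (x p) (x p)) := by
  simp only [pairDefect, Finset.sum_sub_distrib, ← Finset.mul_sum, ← Finset.sum_mul,
    ← crossForm_sum_sum]
  ring

theorem sum_mul_pairDefect (m : R) (x y : κ → R) :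
    (∑ i, y i) * pairDefect m x y =
      2 * (∑ i, y i) * (m - ∑ i, x i) * crossForm x y
        + ((∑ i, y i) • x - (∑ i, x i) • y) ⬝ᵥ ((∑ i, y i) • x - (∑ i, x i) • y)
        + (∑ i, x i) * (∑ i, x i - ∑ i, y i) * crossForm y y := by
  simp only [pairDefect, crossForm, sub_dotProduct, dotProduct_sub, smul_dotProduct,
    dotProduct_smul, smul_eq_mul, dotProduct_comm y x]
  ring

variable [LinearOrder R] [IsStrictOrderedRing R] {m : R} {x y : κ → R} {z : ι → κ → R}

theorem crossForm_nonneg (hx : 0 ≤ x) (hy : 0 ≤ y) : 0 ≤ crossForm x y := by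
  rw [crossForm_eq_sum_offDiag]
  exact Finset.sum_nonneg fun ij _ => mul_nonneg (hx ij.1) (hy ij.2)

theorem crossForm_eq_zero_iff (hx : 0 ≤ x) (hy : 0 ≤ y) :
    crossForm x y = 0 ↔ ∀ i j, i ≠ j → x i * y j = 0 := by
  rw [crossForm_eq_sum_offDiag,
    Finset.sum_eq_zero_iff_of_nonneg fun ij _ => mul_nonneg (hx ij.1) (hy ij.2)]
  simp [Finset.mem_offDiag]

theorem crossForm_self_eq_zero_iff_of_antitone [PartialOrder κ] [OrderBot κ] (hx : 0 ≤ x)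
    (anti : Antitone x) : crossForm x x = 0 ↔ ∀ i, i ≠ ⊥ → x i = 0 := by
  rw [crossForm_eq_zero_iff hx hx]
  constructor
  · intro h i hi
    rcases mul_eq_zero.1 (h i ⊥ hi) with h_zero | h_bot
    · exact h_zero
    · exact le_antisymm (h_bot ▸ anti bot_le) (hx i)
  · intro h i j hij
    by_cases hi : i = ⊥
    · rw [h j fun hj => hij (hi.trans hj.symm), mul_zero]
    · rw [h i hi, zero_mul]

theorem dotProduct_self_le_sum_mul_pairDefect (hx : 0 ≤ x) (hy : 0 ≤ y)
    (hyx : ∑ i, y i ≤ ∑ i, x i) (hm : ∑ i, x i ≤ m) :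
    ((∑ i, y i) • x - (∑ i, x i) • y) ⬝ᵥ ((∑ i, y i) • x - (∑ i, x i) • y) ≤
      (∑ i, y i) * pairDefect m x y := by
  have hsx : 0 ≤ ∑ i, x i := Finset.sum_nonneg fun i _ => hx i
  have hsy : 0 ≤ ∑ i, y i := Finset.sum_nonneg fun i _ => hy i
  have mixed : 0 ≤ 2 * (∑ i, y i) * (m - ∑ i, x i) * crossForm x y :=
    mul_nonneg (mul_nonneg (mul_nonneg zero_le_two hsy) (sub_nonneg.2 hm)) (crossForm_nonneg hx hy)
  have diagonal : 0 ≤ (∑ i, x i) * (∑ i, x i - ∑ i, y i) * crossForm y y :=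
    mul_nonneg (mul_nonneg hsx (sub_nonneg.2 hyx)) (crossForm_nonneg hy hy)
  rw [sum_mul_pairDefect]
  linarith

theorem pairDefect_nonneg (hx : 0 ≤ x) (hy : 0 ≤ y) (hxm : ∑ i, x i ≤ m) (hym : ∑ i, y i ≤ m) :
    0 ≤ pairDefect m x y := by
  wlog hyx : ∑ i, y i ≤ ∑ i, x i generalizing x y
  · rw [pairDefect_comm]
    exact this hy hx hym hxm (le_of_not_ge hyx)
  rcases (Finset.sum_nonneg fun i _ => hy i).eq_or_lt with hsy | hsy
  · obtain rfl : y = 0 := (Fintype.sum_eq_zero_iff_of_nonneg hy).1 hsy.symm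
    simp [pairDefect, crossForm]
  · refine nonneg_of_mul_nonneg_right (le_trans ?_
      (dotProduct_self_le_sum_mul_pairDefect hx hy hyx hxm)) hsy
    exact Finset.sum_nonneg fun i _ => mul_self_nonneg _

theorem sum_smul_eq_sum_smul_of_pairDefect_eq_zero (hx : 0 ≤ x) (hy : 0 ≤ y)
    (hxm : ∑ i, x i ≤ m) (hym : ∑ i, y i ≤ m) (h : pairDefect m x y = 0) :
    (∑ i, y i) • x = (∑ i, x i) • y := by
  wlog hyx : ∑ i, y i ≤ ∑ i, x i generalizing x y
  · exact (this hy hx hym hxm (pairDefect_comm m x y ▸ h) (le_of_not_ge hyx)).symm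
  have square_le := dotProduct_self_le_sum_mul_pairDefect hx hy hyx hxm
  rw [h, mul_zero] at square_le
  exact sub_eq_zero.1 (dotProduct_self_eq_zero.1
    (square_le.antisymm (Finset.sum_nonneg fun i _ => mul_self_nonneg _)))

theorem sum_mul_sum_crossForm_self_le (hz : ∀ p, 0 ≤ z p) (hm : ∀ p, ∑ i, z p i ≤ m) :
    (∑ p, ∑ i, z p i) * ∑ p, crossForm (z p) (z p) ≤ m * crossForm (∑ p, z p) (∑ p, z p) := by
  have defect_nonneg : 0 ≤ ∑ p, ∑ q, pairDefect m (z p) (z q) :=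
    Finset.sum_nonneg fun p _ => Finset.sum_nonneg fun q _ =>
      pairDefect_nonneg (hz p) (hz q) (hm p) (hm q)
  rw [sum_sum_pairDefect] at defect_nonneg
  linarith

theorem sum_mul_sum_crossForm_self_eq_iff_forall_pairDefect_eq_zero (hz : ∀ p, 0 ≤ z p)
    (hm : ∀ p, ∑ i, z p i ≤ m) :
    (∑ p, ∑ i, z p i) * ∑ p, crossForm (z p) (z p) = m * crossForm (∑ p, z p) (∑ p, z p) ↔
      ∀ p q, pairDefect m (z p) (z q) = 0 := by
  have defect_nonneg (p q) : 0 ≤ pairDefect m (z p) (z q) :=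
    pairDefect_nonneg (hz p) (hz q) (hm p) (hm q)
  have sum_eq_zero_iff : ∑ p, ∑ q, pairDefect m (z p) (z q) = 0 ↔
      ∀ p q, pairDefect m (z p) (z q) = 0 := by
    simp only [Fintype.sum_eq_zero_iff_of_nonneg (fun p => Fintype.sum_nonneg (defect_nonneg p)),
      funext_iff, Pi.zero_apply, Fintype.sum_eq_zero_iff_of_nonneg (defect_nonneg _)]
  rw [← sum_eq_zero_iff, sum_sum_pairDefect, mul_eq_zero_iff_left two_ne_zero, sub_eq_zero, eq_comm]

theorem sum_eq_and_eq_or_crossForm_eq_zero_of_pairDefect_eq_zero (hz : ∀ p, 0 ≤ z p)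
    (hpos : ∀ p, 0 < ∑ i, z p i) (hm : ∀ p, ∑ i, z p i ≤ m)
    (h : ∀ p q, pairDefect m (z p) (z q) = 0) :
    ((∀ p, ∑ i, z p i = m) ∧ ∀ p q, z p = z q) ∨ crossForm (∑ p, z p) (∑ p, z p) = 0 := by
  have proportional (p q) : (∑ i, z q i) • z p = (∑ i, z p i) • z q :=
    sum_smul_eq_sum_smul_of_pairDefect_eq_zero (hz p) (hz q) (hm p) (hm q) (h p q)
  by_cases hB : ∃ p, crossForm (z p) (z p) = 0
  · obtain ⟨p, hp⟩ := hB
    have sum_proportional : (∑ i, z p i) • ∑ q, z q = (∑ q, ∑ i, z q i) • z p := by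
      rw [Finset.smul_sum, Finset.sum_smul]
      exact Finset.sum_congr rfl fun q _ => proportional q p
    have scaled := congrArg (fun w => crossForm w w) sum_proportional
    simp only [crossForm_smul_smul, hp, mul_zero] at scaled
    exact Or.inr ((mul_eq_zero.1 scaled).resolve_left (mul_pos (hpos p) (hpos p)).ne')
  · have sum_eq (p) : ∑ i, z p i = m := by
      have diagonal : 2 * (m - ∑ i, z p i) * crossForm (z p) (z p) = 0 := by
        rw [← h p p, pairDefect]
        ring
      have := (mul_eq_zero.1 diagonal).resolve_right fun hp => hB ⟨p, hp⟩
      linarith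
    refine Or.inl ⟨sum_eq, fun p q => smul_right_injective _ (hpos p).ne' ?_⟩
    simpa only [sum_eq] using proportional p q

theorem sum_mul_sum_crossForm_self_eq_iff (hz : ∀ p, 0 ≤ z p) (hpos : ∀ p, 0 < ∑ i, z p i)
    (hm : ∀ p, ∑ i, z p i ≤ m) :
    (∑ p, ∑ i, z p i) * ∑ p, crossForm (z p) (z p) = m * crossForm (∑ p, z p) (∑ p, z p) ↔
      ((∀ p, ∑ i, z p i = m) ∧ ∀ p q, z p = z q) ∨ crossForm (∑ p, z p) (∑ p, z p) = 0 := by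
  constructor
  · intro h
    exact sum_eq_and_eq_or_crossForm_eq_zero_of_pairDefect_eq_zero hz hpos hm
      ((sum_mul_sum_crossForm_self_eq_iff_forall_pairDefect_eq_zero hz hm).1 h)
  · rintro (⟨sum_eq, all_eq⟩ | h)
    · rw [sum_mul_sum_crossForm_self_eq_iff_forall_pairDefect_eq_zero hz hm]
      intro p q
      rw [pairDefect, all_eq p q, sum_eq]
      ring
    · have le_zero := sum_mul_sum_crossForm_self_le hz hm
      rw [h, mul_zero] at le_zero ⊢
      exact le_zero.antisymm (mul_nonneg (Finset.sum_nonneg fun p _ => (hpos p).le)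
        (Finset.sum_nonneg fun p _ => crossForm_nonneg (hz p) (hz p)))

end CrossForm

theorem finsum_eq_sum_fin {M : Type*} [AddCommMonoid M] {f : ℕ → M} {N : ℕ}
    (h : ∀ i, N ≤ i → f i = 0) : ∑ᶠ i, f i = ∑ i : Fin N, f i := by
  rw [Fin.sum_univ_eq_sum_range f N]
  refine finsum_eq_sum_of_support_subset f fun i hi => ?_
  simpa using not_le.1 fun hNi => hi (h i hNi)

namespace PartitionOf

section Single

variable {n n' N : ℕ} (lam : PartitionOf n)

theorem parts_ne_zero_iff_lt_partLength (i : ℕ) : lam.parts i ≠ 0 ↔ i < partLength lam := by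
  have exists_zero : ∃ k, lam.parts k = 0 :=
    lam.eventually_zero.imp fun N hN => hN N le_rfl
  have lt_find (i) : lam.parts i ≠ 0 ↔ i < Nat.find exists_zero := by
    refine ⟨fun hi => not_le.1 fun hle => hi ?_, Nat.find_min exists_zero⟩
    exact Nat.eq_zero_of_le_zero (Nat.find_spec exists_zero ▸ lam.antitone hle)
  have support_eq : {i | lam.parts i ≠ 0} = Set.Iio (Nat.find exists_zero) :=
    Set.ext lt_find
  rw [partLength, support_eq, Set.ncard_Iio_nat, lt_find]

theorem parts_eq_zero_of_partLength_le {i : ℕ} (hi : partLength lam ≤ i) : lam.parts i = 0 :=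
  not_not.1 fun h => hi.not_gt ((lam.parts_ne_zero_iff_lt_partLength i).1 h)

theorem sum_parts_fin_partLength : ∑ p : Fin (partLength lam), lam.parts p = n := by
  rw [← finsum_eq_sum_fin fun _ => lam.parts_eq_zero_of_partLength_le, lam.sum_eq]

theorem finsum_parts_sq_eq_sum_fin_partLength :
    ∑ᶠ i, (lam.parts i : ℤ) ^ 2 = ∑ p : Fin (partLength lam), (lam.parts p : ℤ) ^ 2 :=
  finsum_eq_sum_fin fun i hi => by simp [lam.parts_eq_zero_of_partLength_le hi]

theorem rectangular_iff_forall_parts_eq_parts_zero :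
    Rectangular lam ↔ ∀ p : Fin (partLength lam), lam.parts p = lam.parts 0 := by
  constructor
  · intro h p
    have hp := (lam.parts_ne_zero_iff_lt_partLength p).2 p.2
    exact h p 0 hp fun h0 => hp (Nat.eq_zero_of_le_zero (h0 ▸ lam.antitone (Nat.zero_le p)))
  · intro h i j hi hj
    rw [h ⟨i, (lam.parts_ne_zero_iff_lt_partLength i).1 hi⟩,
      h ⟨j, (lam.parts_ne_zero_iff_lt_partLength j).1 hj⟩]

theorem parts_zero_eq_of_forall_ne_zero (h : ∀ i, i ≠ 0 → lam.parts i = 0) : lam.parts 0 = n :=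
  (finsum_eq_single lam.parts 0 h).symm.trans lam.sum_eq

/-- The quantity `n² - ‖λ‖²` attached to a partition `λ` of `n`; it is the value at `(λ, λ)` of the
form `crossForm`. -/
noncomputable def crossWeight : ℤ :=
  (n : ℤ) ^ 2 - ∑ᶠ i, (lam.parts i : ℤ) ^ 2

/-- The first `N + 1` terms of a partition, as an integer vector to which `crossForm` applies. The
length is nonzero so that the largest part is always among the entries. -/
def truncate (N : ℕ) : Fin (N + 1) → ℤ :=
  fun i => lam.parts i

theorem truncate_nonneg : 0 ≤ lam.truncate N :=
  fun i => Int.natCast_nonneg (lam.parts i)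

theorem antitone_truncate : Antitone (lam.truncate N) :=
  fun _ _ hij => Int.ofNat_le.2 (lam.antitone hij)

variable {lam}

theorem sum_truncate (hN : ∀ i, N < i → lam.parts i = 0) : ∑ i, lam.truncate N i = n := by
  have sum_parts : ∑ i : Fin (N + 1), lam.parts i = n :=
    (finsum_eq_sum_fin hN).symm.trans lam.sum_eq
  unfold truncate
  exact_mod_cast sum_parts

theorem crossForm_truncate_self (hN : ∀ i, N < i → lam.parts i = 0) :
    crossForm (lam.truncate N) (lam.truncate N) = lam.crossWeight := by
  have norm_sq : ∑ᶠ i, (lam.parts i : ℤ) ^ 2 = lam.truncate N ⬝ᵥ lam.truncate N := by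
    rw [finsum_eq_sum_fin (N := N + 1) fun i hi => by simp [hN i hi]]
    exact Finset.sum_congr rfl fun i _ => sq _
  rw [crossForm, sum_truncate hN, crossWeight, norm_sq, sq]

theorem truncate_eq_truncate_iff {lam' : PartitionOf n'} (hN : ∀ i, N < i → lam.parts i = 0)
    (hN' : ∀ i, N < i → lam'.parts i = 0) :
    lam.truncate N = lam'.truncate N ↔ lam.parts = lam'.parts := by
  refine ⟨fun h => funext fun i => ?_, fun h => by unfold truncate; rw [h]⟩
  by_cases hi : N < i
  · rw [hN i hi, hN' i hi]
  · exact Int.ofNat_inj.1 (congrFun h ⟨i, Nat.lt_succ_of_le (not_lt.1 hi)⟩)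

theorem crossWeight_eq_zero_iff : lam.crossWeight = 0 ↔ ∀ i, i ≠ 0 → lam.parts i = 0 := by
  obtain ⟨N, hN⟩ := lam.eventually_zero
  replace hN : ∀ i, N < i → lam.parts i = 0 := fun i hi => hN i hi.le
  rw [← crossForm_truncate_self hN,
    crossForm_self_eq_zero_iff_of_antitone lam.truncate_nonneg lam.antitone_truncate]
  refine ⟨fun h i hi => ?_, fun h i hi => ?_⟩
  · by_cases hiN : N < i
    · exact hN i hiN
    · exact Int.ofNat_eq_zero.1
        (h ⟨i, Nat.lt_succ_of_le (not_lt.1 hiN)⟩ fun h0 => hi (congrArg Fin.val h0))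
  · exact Int.ofNat_eq_zero.2 (h i fun h0 => hi (Fin.ext h0))

end Single

section Family

variable {ι : Type*} {a : ι → ℕ} (ν : ∀ p, PartitionOf (a p)) {m : ℕ}

theorem exists_forall_parts_eq_zero [Finite ι] : ∃ N, ∀ p i, N < i → (ν p).parts i = 0 := by
  have eventually_zero : ∀ᶠ i in Filter.atTop, ∀ p, (ν p).parts i = 0 :=
    Filter.eventually_all.2 fun p => Filter.eventually_atTop.2 (ν p).eventually_zero
  obtain ⟨N, hN⟩ := Filter.eventually_atTop.1 eventually_zero
  exact ⟨N, fun p i hi => hN i hi.le p⟩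

variable [Fintype ι]

/-- The coordinatewise sum of a finite family of partitions. -/
def sum : PartitionOf (∑ p, a p) where
  parts i := ∑ p, (ν p).parts i
  antitone _ _ hij := Finset.sum_le_sum fun p _ => (ν p).antitone hij
  eventually_zero := by
    obtain ⟨N, hN⟩ := exists_forall_parts_eq_zero ν
    exact ⟨N + 1, fun i hi => Finset.sum_eq_zero fun p _ => hN p i hi⟩
  sum_eq := by
    obtain ⟨N, hN⟩ := exists_forall_parts_eq_zero ν
    rw [finsum_eq_sum_fin fun i hi => Finset.sum_eq_zero fun p _ => hN p i hi, Finset.sum_comm]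
    exact Finset.sum_congr rfl fun p _ => (finsum_eq_sum_fin (hN p)).symm.trans (ν p).sum_eq

theorem truncate_sum (N : ℕ) : (sum ν).truncate N = ∑ p, (ν p).truncate N := by
  ext i
  simp [truncate, sum]

theorem crossWeight_sum_eq_zero_iff : (sum ν).crossWeight = 0 ↔
    ∀ p, (ν p).parts 0 = a p ∧ ∀ i, i ≠ 0 → (ν p).parts i = 0 := by
  rw [crossWeight_eq_zero_iff]
  refine ⟨fun h p => ?_, fun h i hi => Finset.sum_eq_zero fun p _ => (h p).2 i hi⟩
  have single (i) (hi : i ≠ 0) : (ν p).parts i = 0 :=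
    Finset.sum_eq_zero_iff.1 (h i hi) p (Finset.mem_univ p)
  exact ⟨(ν p).parts_zero_eq_of_forall_ne_zero single, single⟩

variable {ν}

theorem sum_mul_sum_crossWeight_le (hm : ∀ p, a p ≤ m) :
    (∑ p, (a p : ℤ)) * ∑ p, (ν p).crossWeight ≤ m * (sum ν).crossWeight := by
  obtain ⟨N, hN⟩ := exists_forall_parts_eq_zero ν
  have hN_sum (i) (hi : N < i) : (sum ν).parts i = 0 := Finset.sum_eq_zero fun p _ => hN p i hi
  have bound := sum_mul_sum_crossForm_self_le (m := (m : ℤ)) (z := fun p => (ν p).truncate N)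
    (fun p => (ν p).truncate_nonneg) fun p => by
      rw [sum_truncate (hN p)]
      exact_mod_cast hm p
  simpa only [← truncate_sum, crossForm_truncate_self hN_sum, crossForm_truncate_self (hN _),
    sum_truncate (hN _)] using bound

theorem sum_mul_sum_crossWeight_eq_iff (hpos : ∀ p, 0 < a p) (hm : ∀ p, a p ≤ m) :
    (∑ p, (a p : ℤ)) * ∑ p, (ν p).crossWeight = m * (sum ν).crossWeight ↔
      ((∀ p, a p = m) ∧ ∀ p q, (ν p).parts = (ν q).parts) ∨
        ∀ p, (ν p).parts 0 = a p ∧ ∀ i, i ≠ 0 → (ν p).parts i = 0 := by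
  obtain ⟨N, hN⟩ := exists_forall_parts_eq_zero ν
  have hN_sum (i) (hi : N < i) : (sum ν).parts i = 0 := Finset.sum_eq_zero fun p _ => hN p i hi
  have sum_entries (p) : ∑ i, (ν p).truncate N i = a p := sum_truncate (hN p)
  have equality := sum_mul_sum_crossForm_self_eq_iff (m := (m : ℤ))
    (z := fun p => (ν p).truncate N) (fun p => (ν p).truncate_nonneg)
    (fun p => by simpa only [sum_entries, Int.natCast_pos] using hpos p)
    (fun p => by simpa only [sum_entries, Int.ofNat_le] using hm p)
  simpa only [← truncate_sum, crossForm_truncate_self hN_sum, crossForm_truncate_self (hN _),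
    sum_entries, Int.ofNat_inj, truncate_eq_truncate_iff (hN _) (hN _),
    crossWeight_sum_eq_zero_iff] using equality

end Family

end PartitionOf

/-- Fix a partition `μ` of `n` with `r` parts.  For partitions `νᵖ` of `μ_p`
(`p = 1,…,r`) we have
`μ₁·‖Σ_p νᵖ‖² − n·Σ_p ‖νᵖ‖² ≤ μ₁·n² − n·‖μ‖²`, with equality iff either
(i) `μ` is rectangular and all the `νᵖ` are equal, or (ii) `νᵖ = (μ_p)` for all `p`. -/
theorem stmt_4 (n r : ℕ) (μ : PartitionOf n) (hr : partLength μ = r)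
    (ν : ∀ p : Fin r, PartitionOf (μ.parts p)) :
    (μ.parts 0 : ℤ) * (∑ᶠ i, ((∑ p, (ν p).parts i : ℕ) : ℤ) ^ 2)
        - (n : ℤ) * ∑ p, ∑ᶠ i, ((ν p).parts i : ℤ) ^ 2
      ≤ (μ.parts 0 : ℤ) * (n : ℤ) ^ 2 - (n : ℤ) * ∑ᶠ i, (μ.parts i : ℤ) ^ 2 ∧
    ((μ.parts 0 : ℤ) * (∑ᶠ i, ((∑ p, (ν p).parts i : ℕ) : ℤ) ^ 2)
        - (n : ℤ) * ∑ p, ∑ᶠ i, ((ν p).parts i : ℤ) ^ 2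
      = (μ.parts 0 : ℤ) * (n : ℤ) ^ 2 - (n : ℤ) * ∑ᶠ i, (μ.parts i : ℤ) ^ 2 ↔
      (Rectangular μ ∧ ∀ p q : Fin r, (ν p).parts = (ν q).parts) ∨
      (∀ p : Fin r, (ν p).parts 0 = μ.parts p ∧ ∀ i, i ≠ 0 → (ν p).parts i = 0)) := by
  subst hr
  have sum_parts : ∑ p : Fin (partLength μ), (μ.parts p : ℤ) = n := by
    exact_mod_cast μ.sum_parts_fin_partLength
  have parts_pos (p : Fin (partLength μ)) : 0 < μ.parts p :=
    Nat.pos_of_ne_zero ((μ.parts_ne_zero_iff_lt_partLength p).2 p.2)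
  have parts_le (p : Fin (partLength μ)) : μ.parts p ≤ μ.parts 0 := μ.antitone (Nat.zero_le p)
  have bound := PartitionOf.sum_mul_sum_crossWeight_le (ν := ν) parts_le
  have equality := PartitionOf.sum_mul_sum_crossWeight_eq_iff (ν := ν) parts_pos parts_le
  simp only [PartitionOf.crossWeight, PartitionOf.sum, Finset.sum_sub_distrib, sum_parts,
    ← μ.finsum_parts_sq_eq_sum_fin_partLength, μ.sum_parts_fin_partLength] at bound equality
  rw [μ.rectangular_iff_forall_parts_eq_parts_zero, ← equality]
  exact ⟨by linarith, fun h => by linarith, fun h => by linarith⟩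
end

section
/- Fix integers g ≥ 0, k ≥ 1, n ≥ 1 and a k-tuple 𝛍 = (μ¹,…,μᵏ) of partitions of n with δ(𝛍) ≥ 0. Then d_𝛍 = 2 if and only if δ(𝛍) = 0 and every μⁱ is rectangular. Moreover, when d_𝛍 = 2, writing lᵢ := l(μⁱ), either g = 1 and lᵢ = 1 for all i, or g = 0 and the multiset of those lᵢ that are greater than 1 is one of {2,2,2,2}, {3,3,3}, {2,4,4}, {2,3,6}. -/
/-- `d_𝛍 = n²(2g−2+k) − Σ_{i,j}(μⁱⱼ)² + 2`. -/
noncomputable def dStat (g k : ℕ) {n : ℕ} (μ : Fin k → PartitionOf n) : ℤ :=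
  (2 * (g : ℤ) - 2 + (k : ℤ)) * (n : ℤ) ^ 2
    - (∑ i, ∑ᶠ j, ((μ i).parts j : ℤ) ^ 2) + 2

/-- `δ(𝛍) = (2g−2+k)n − Σ_i μⁱ₁`. -/
noncomputable def deltaStatZ (g k : ℕ) {n : ℕ} (μ : Fin k → PartitionOf n) : ℤ :=
  (2 * (g : ℤ) - 2 + (k : ℤ)) * (n : ℤ) - ∑ i, ((μ i).parts 0 : ℤ)

/-!
Summing `n μ₁ - Σⱼ μⱼ² = Σⱼ μⱼ (μ₁ - μⱼ)` over the partitions gives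
`d_𝛍 - 2 = n δ(𝛍) + Σᵢ Σⱼ μⁱⱼ (μⁱ₁ - μⁱⱼ)`, a sum of nonnegative terms in which the inner sums vanish
exactly for rectangular partitions. A rectangular `μ` has `μ₁ = n / l(μ)`, so in the equality case
`δ(𝛍)` is `-n` times the Euler characteristic of the orbifold of genus `g` with cone points of
orders `l(μⁱ)`. The claim is then the classification of the Euclidean orbifolds.
-/

theorem cast_inv_le_half {x : ℕ} (hx : 1 < x) : (x : ℚ)⁻¹ ≤ 2⁻¹ :=
  inv_anti₀ two_pos (mod_cast hx)

theorem card_eq_three_or_four_of_sum_inv {s : Multiset ℕ} (hs : ∀ x ∈ s, 1 < x)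
    (h : (s.map fun x : ℕ => (x : ℚ)⁻¹).sum = s.card - 2) : s.card = 3 ∨ s.card = 4 := by
  have hupper : (s.map fun x : ℕ => (x : ℚ)⁻¹).sum ≤ s.card * 2⁻¹ := by
    simpa using Multiset.sum_le_card_nsmul (s.map fun x : ℕ => (x : ℚ)⁻¹) 2⁻¹
      (by simpa using fun x hx => cast_inv_le_half (hs x hx))
  have hne : s ≠ ∅ := by
    rintro rfl
    norm_num at h
  have hpos : 0 < (s.map fun x : ℕ => (x : ℚ)⁻¹).sum := by
    simpa using Multiset.sum_lt_sum_of_nonempty (f := fun _ => (0 : ℚ)) hne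
      fun x hx => inv_pos.mpr (Nat.cast_pos.mpr (zero_lt_one.trans (hs x hx)))
  have hgt : 2 < s.card := by exact_mod_cast (by linarith : (2 : ℚ) < s.card)
  have hle : s.card ≤ 4 := by exact_mod_cast (by linarith : (s.card : ℚ) ≤ 4)
  omega

theorem eq_replicate_two_of_sum_inv {s : Multiset ℕ} (hs : ∀ x ∈ s, 1 < x)
    (h : (s.map fun x : ℕ => (x : ℚ)⁻¹).sum = s.card * 2⁻¹) :
    s = Multiset.replicate s.card 2 := by
  refine Multiset.eq_replicate.mpr ⟨rfl, fun x hx => ?_⟩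
  have hnonneg : ∀ y ∈ s.map fun x : ℕ => 2⁻¹ - (x : ℚ)⁻¹, 0 ≤ y := by
    simpa using fun x hx => cast_inv_le_half (hs x hx)
  have hsum : (s.map fun x : ℕ => 2⁻¹ - (x : ℚ)⁻¹).sum = 0 := by
    simp [Multiset.sum_map_sub, h]
  have hterm := Multiset.all_zero_of_le_zero_le_of_sum_eq_zero hnonneg hsum _
    (Multiset.mem_map_of_mem _ hx)
  exact_mod_cast (inv_injective (sub_eq_zero.mp hterm : (2 : ℚ)⁻¹ = (x : ℚ)⁻¹)).symm

theorem exists_sorted_triple_of_card_eq_three {α : Type*} [LinearOrder α] {s : Multiset α}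
    (hs : s.card = 3) : ∃ a b c, a ≤ b ∧ b ≤ c ∧ s = {a, b, c} := by
  obtain ⟨a, b, c, habc⟩ := List.length_eq_three.mp ((s.length_sort (· ≤ ·)).trans hs)
  have hsorted := s.pairwise_sort (· ≤ ·)
  have hcoe := s.sort_eq (· ≤ ·)
  rw [habc] at hsorted hcoe
  simp only [List.pairwise_cons, List.mem_cons] at hsorted
  exact ⟨a, b, c, hsorted.1 b (.inl rfl), hsorted.2.1 c (.inl rfl), hcoe.symm⟩

theorem eq_of_inv_add_inv_add_inv_eq_one {a b c : ℕ} (ha : 0 < a) (hab : a ≤ b) (hbc : b ≤ c)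
    (h : (a : ℚ)⁻¹ + (b : ℚ)⁻¹ + (c : ℚ)⁻¹ = 1) :
    (a = 3 ∧ b = 3 ∧ c = 3) ∨ (a = 2 ∧ b = 4 ∧ c = 4) ∨ (a = 2 ∧ b = 3 ∧ c = 6) := by
  have hb : 0 < b := ha.trans_le hab
  have hc : 0 < c := hb.trans_le hbc
  have hba : (b : ℚ)⁻¹ ≤ (a : ℚ)⁻¹ := inv_anti₀ (mod_cast ha) (mod_cast hab)
  have hcb : (c : ℚ)⁻¹ ≤ (b : ℚ)⁻¹ := inv_anti₀ (mod_cast hb) (mod_cast hbc)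
  have hcpos : 0 < (c : ℚ)⁻¹ := inv_pos.mpr (mod_cast hc)
  have ha1 : 1 < a := by
    have : (a : ℚ)⁻¹ < 1 := by linarith [hcpos.trans_le hcb]
    exact_mod_cast (inv_lt_one₀ (mod_cast ha)).mp this
  have ha3 : a ≤ 3 := by
    have : (3 : ℚ)⁻¹ ≤ (a : ℚ)⁻¹ := by linarith
    exact_mod_cast (inv_le_inv₀ three_pos (mod_cast ha)).mp this
  have hb4 : b ≤ 4 := by
    have : (4 : ℚ)⁻¹ ≤ (b : ℚ)⁻¹ := by linarith [cast_inv_le_half ha1]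
    exact_mod_cast (inv_le_inv₀ four_pos (mod_cast hb)).mp this
  have hcleared : b * c + a * c + a * b = a * b * c := by
    field_simp at h
    exact_mod_cast (by linarith : (b * c + a * c + a * b : ℚ) = a * b * c)
  interval_cases a <;> interval_cases b <;> omega

/-- The Euler characteristic of the closed orientable orbifold of genus `g` whose cone points have
the orders in `s`. Orders `1` are allowed and contribute nothing; an order `0` counts as a
puncture, since `0⁻¹ = 0`. -/
def orbifoldEulerChar (g : ℕ) (s : Multiset ℕ) : ℚ :=
  2 - 2 * g - (s.map fun x : ℕ => 1 - (x : ℚ)⁻¹).sum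

namespace orbifoldEulerChar

variable {g : ℕ} {s : Multiset ℕ}

theorem filter_one_lt (g : ℕ) (hs : ∀ x ∈ s, x ≠ 0) :
    orbifoldEulerChar g (s.filter (1 < ·)) = orbifoldEulerChar g s := by
  have hone : ∀ x ∈ s.filter (¬ 1 < ·), x = 1 := fun x hx => by
    obtain ⟨hxs, hx1⟩ := Multiset.mem_filter.mp hx
    exact le_antisymm (not_lt.mp hx1) (Nat.one_le_iff_ne_zero.mpr (hs x hxs))
  have hzero : ((s.filter (¬ 1 < ·)).map fun x : ℕ => 1 - (x : ℚ)⁻¹).sum = 0 :=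
    Multiset.sum_eq_zero fun y hy => by
      obtain ⟨x, hx, rfl⟩ := Multiset.mem_map.mp hy
      simp [hone x hx]
  conv_rhs => rw [← Multiset.filter_add_not (1 < ·) s]
  simp only [orbifoldEulerChar, Multiset.map_add, Multiset.sum_add, hzero, add_zero]

theorem cone_terms_nonneg (s : Multiset ℕ) :
    ∀ y ∈ s.map fun x : ℕ => 1 - (x : ℚ)⁻¹, 0 ≤ y := by
  intro y hy
  obtain ⟨x, -, rfl⟩ := Multiset.mem_map.mp hy
  exact sub_nonneg.mpr (Nat.cast_inv_le_one x)

theorem genus_le_one_of_nonneg (h : 0 ≤ orbifoldEulerChar g s) : g ≤ 1 := by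
  have hsum := Multiset.sum_nonneg (cone_terms_nonneg s)
  have hg : (g : ℚ) ≤ 1 := by unfold orbifoldEulerChar at h; linarith
  exact_mod_cast hg

theorem forall_eq_one_of_genus_one (h : orbifoldEulerChar 1 s = 0) : ∀ x ∈ s, x = 1 := by
  intro x hx
  have hsum : (s.map fun x : ℕ => 1 - (x : ℚ)⁻¹).sum = 0 := by
    unfold orbifoldEulerChar at h; push_cast at h; linarith
  have hterm := Multiset.all_zero_of_le_zero_le_of_sum_eq_zero (cone_terms_nonneg s) hsum _
    (Multiset.mem_map_of_mem _ hx)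
  exact_mod_cast inv_eq_one.mp (sub_eq_zero.mp hterm : 1 = (x : ℚ)⁻¹).symm

theorem sum_inv_eq_card_sub_two (h : orbifoldEulerChar 0 s = 0) :
    (s.map fun x : ℕ => (x : ℚ)⁻¹).sum = s.card - 2 := by
  simp only [orbifoldEulerChar, Nat.cast_zero, mul_zero, sub_zero, Multiset.sum_map_sub,
    Multiset.map_const', Multiset.sum_replicate, nsmul_eq_mul, mul_one] at h
  linarith

theorem eq_of_genus_zero (hs : ∀ x ∈ s, 1 < x)
    (h : orbifoldEulerChar 0 s = 0) :
    s = {2, 2, 2, 2} ∨ s = {3, 3, 3} ∨ s = {2, 4, 4} ∨ s = {2, 3, 6} := by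
  have hinv := sum_inv_eq_card_sub_two h
  rcases card_eq_three_or_four_of_sum_inv hs hinv with hcard | hcard
  · obtain ⟨a, b, c, hab, hbc, rfl⟩ := exists_sorted_triple_of_card_eq_three hcard
    have hsum : (a : ℚ)⁻¹ + (b : ℚ)⁻¹ + (c : ℚ)⁻¹ = 1 := by
      rw [hcard] at hinv
      simp only [Multiset.insert_eq_cons, Multiset.map_cons, Multiset.map_singleton,
        Multiset.sum_cons, Multiset.sum_singleton] at hinv
      linarith
    have ha : 0 < a := zero_lt_one.trans (hs a (by simp))
    rcases eq_of_inv_add_inv_add_inv_eq_one ha hab hbc hsum with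
      ⟨rfl, rfl, rfl⟩ | ⟨rfl, rfl, rfl⟩ | ⟨rfl, rfl, rfl⟩ <;> simp
  · left
    rw [eq_replicate_two_of_sum_inv hs (by rw [hinv, hcard]; norm_num), hcard]
    rfl

end orbifoldEulerChar

namespace PartitionOf

variable {n : ℕ} (p : PartitionOf n)

theorem finite_support_parts : p.parts.support.Finite := by
  obtain ⟨N, hN⟩ := p.eventually_zero
  exact (Set.finite_lt_nat N).subset fun i hi => not_le.mp fun h => hi (hN i h)

theorem rectangular_iff : Rectangular p ↔ ∀ j, p.parts j = 0 ∨ p.parts j = p.parts 0 := by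
  constructor
  · intro h j
    refine or_iff_not_imp_left.mpr fun hj => h j 0 hj fun h0 => hj ?_
    exact Nat.le_zero.mp (h0 ▸ p.antitone j.zero_le)
  · intro h i j hi hj
    exact ((h i).resolve_left hi).trans ((h j).resolve_left hj).symm

/-- `Σⱼ λⱼ (λ₁ - λⱼ)`, which measures the failure of `λ` to be rectangular. -/
noncomputable def rectangularDefect : ℤ :=
  ∑ᶠ j, (p.parts j : ℤ) * (p.parts 0 - p.parts j)

theorem parts_mul_sub_nonneg (j : ℕ) :
    0 ≤ (p.parts j : ℤ) * (p.parts 0 - p.parts j) :=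
  mul_nonneg (Int.natCast_nonneg _) (sub_nonneg.mpr (mod_cast p.antitone j.zero_le))

theorem rectangularDefect_nonneg : 0 ≤ p.rectangularDefect :=
  finsum_nonneg p.parts_mul_sub_nonneg

theorem rectangularDefect_eq_sum : p.rectangularDefect =
    ∑ j ∈ p.finite_support_parts.toFinset, (p.parts j : ℤ) * (p.parts 0 - p.parts j) := by
  refine finsum_eq_sum_of_support_subset _ fun j hj => ?_
  simpa using left_ne_zero_of_mul hj

theorem rectangularDefect_eq_zero_iff : p.rectangularDefect = 0 ↔ Rectangular p := by
  rw [rectangularDefect_eq_sum,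
    Finset.sum_eq_zero_iff_of_nonneg fun j _ => p.parts_mul_sub_nonneg j, rectangular_iff]
  refine forall_congr' fun j => ?_
  simp only [Set.Finite.mem_toFinset, Function.mem_support, mul_eq_zero, Nat.cast_eq_zero,
    sub_eq_zero, Nat.cast_inj, eq_comm (a := p.parts 0)]
  tauto

theorem sum_support_parts : ∑ j ∈ p.finite_support_parts.toFinset, p.parts j = n := by
  rw [← finsum_eq_sum p.parts p.finite_support_parts, p.sum_eq]

theorem rectangularDefect_eq :
    p.rectangularDefect = n * p.parts 0 - ∑ᶠ j, (p.parts j : ℤ) ^ 2 := by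
  have hsq : ∑ᶠ j, (p.parts j : ℤ) ^ 2 =
      ∑ j ∈ p.finite_support_parts.toFinset, (p.parts j : ℤ) ^ 2 := by
    refine finsum_eq_sum_of_support_subset _ fun j hj => ?_
    simpa using hj
  have hn : (n : ℤ) = ∑ j ∈ p.finite_support_parts.toFinset, (p.parts j : ℤ) := by
    exact_mod_cast p.sum_support_parts.symm
  rw [rectangularDefect_eq_sum, hsq, hn, Finset.sum_mul, ← Finset.sum_sub_distrib]
  exact Finset.sum_congr rfl fun j _ => by ring

end PartitionOf

namespace Rectangular

variable {n : ℕ} {p : PartitionOf n}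

theorem partLength_mul_parts_zero (h : Rectangular p) :
    partLength p * p.parts 0 = n := by
  have hparts : ∀ j ∈ p.finite_support_parts.toFinset, p.parts j = p.parts 0 := fun j hj =>
    (p.rectangular_iff.mp h j).resolve_left (by simpa using hj)
  calc partLength p * p.parts 0
      = ∑ _j ∈ p.finite_support_parts.toFinset, p.parts 0 := by
        rw [Finset.sum_const, smul_eq_mul, ← Set.ncard_eq_toFinset_card _ p.finite_support_parts]
        rfl
    _ = n := by rw [← Finset.sum_congr rfl hparts, p.sum_support_parts]

theorem partLength_ne_zero (h : Rectangular p) (hn : n ≠ 0) :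
    partLength p ≠ 0 :=
  left_ne_zero_of_mul (h.partLength_mul_parts_zero.trans_ne hn)

theorem cast_parts_zero (h : Rectangular p) (hn : n ≠ 0) :
    (p.parts 0 : ℚ) = n * (partLength p : ℚ)⁻¹ := by
  rw [eq_mul_inv_iff_mul_eq₀ (mod_cast h.partLength_ne_zero hn), mul_comm]
  exact_mod_cast h.partLength_mul_parts_zero

end Rectangular

section Statistics

variable {g k n : ℕ} {μ : Fin k → PartitionOf n}

theorem dStat_eq (g : ℕ) (μ : Fin k → PartitionOf n) :
    dStat g k μ = n * deltaStatZ g k μ + ∑ i, (μ i).rectangularDefect + 2 := by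
  simp only [dStat, deltaStatZ, PartitionOf.rectangularDefect_eq, Finset.sum_sub_distrib,
    ← Finset.mul_sum]
  ring

theorem dStat_eq_two_iff (hn : n ≠ 0) (hδ : 0 ≤ deltaStatZ g k μ) :
    dStat g k μ = 2 ↔ deltaStatZ g k μ = 0 ∧ ∀ i, Rectangular (μ i) := by
  have hdefect : ∀ i ∈ Finset.univ, 0 ≤ (μ i).rectangularDefect :=
    fun i _ => (μ i).rectangularDefect_nonneg
  rw [dStat_eq, add_eq_right,
    add_eq_zero_iff_of_nonneg (by positivity) (Finset.sum_nonneg hdefect),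
    Finset.sum_eq_zero_iff_of_nonneg hdefect]
  simp [hn, PartitionOf.rectangularDefect_eq_zero_iff]

theorem deltaStatZ_eq_neg_mul_orbifoldEulerChar (hn : n ≠ 0) (hμ : ∀ i, Rectangular (μ i)) :
    (deltaStatZ g k μ : ℚ) =
      -n * orbifoldEulerChar g (Finset.univ.val.map fun i => partLength (μ i)) := by
  have hcone : ((Finset.univ.val.map fun i => partLength (μ i)).map
      fun x : ℕ => 1 - (x : ℚ)⁻¹).sum = k - ∑ i, (partLength (μ i) : ℚ)⁻¹ := by
    rw [Multiset.map_map]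
    exact (Finset.sum_sub_distrib ..).trans (by simp)
  have hparts : ∑ i, ((μ i).parts 0 : ℚ) = n * ∑ i, (partLength (μ i) : ℚ)⁻¹ := by
    rw [Finset.mul_sum]
    exact Finset.sum_congr rfl fun i _ => (hμ i).cast_parts_zero hn
  rw [deltaStatZ, orbifoldEulerChar, hcone]
  push_cast
  rw [hparts]
  ring

end Statistics

/-- If `δ(𝛍) ≥ 0` then `d_𝛍 = 2` iff `δ(𝛍) = 0` and every `μⁱ` is rectangular;
moreover in that case either `g = 1` and all lengths are `1`, or `g = 0` and the
multiset of lengths `> 1` is one of `{2,2,2,2}, {3,3,3}, {2,4,4}, {2,3,6}`. -/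
theorem stmt_6 (g k n : ℕ) (hk : 1 ≤ k) (hn : 1 ≤ n)
    (μ : Fin k → PartitionOf n) (hδ : 0 ≤ deltaStatZ g k μ) :
    (dStat g k μ = 2 ↔ deltaStatZ g k μ = 0 ∧ ∀ i, Rectangular (μ i)) ∧
    (dStat g k μ = 2 →
      (g = 1 ∧ ∀ i, partLength (μ i) = 1) ∨
      (g = 0 ∧
        ((Finset.univ.val.map fun i => partLength (μ i)).filter (fun l => 1 < l)
            = ({2, 2, 2, 2} : Multiset ℕ) ∨
         (Finset.univ.val.map fun i => partLength (μ i)).filter (fun l => 1 < l)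
            = ({3, 3, 3} : Multiset ℕ) ∨
         (Finset.univ.val.map fun i => partLength (μ i)).filter (fun l => 1 < l)
            = ({2, 4, 4} : Multiset ℕ) ∨
         (Finset.univ.val.map fun i => partLength (μ i)).filter (fun l => 1 < l)
            = ({2, 3, 6} : Multiset ℕ)))) := by
  have hn0 : n ≠ 0 := Nat.one_le_iff_ne_zero.mp hn
  refine ⟨dStat_eq_two_iff hn0 hδ, fun hd => ?_⟩
  obtain ⟨hδ0, hrect⟩ := (dStat_eq_two_iff hn0 hδ).mp hd
  set lengths : Multiset ℕ := Finset.univ.val.map fun i => partLength (μ i)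
  have hmem (i) : partLength (μ i) ∈ lengths := Multiset.mem_map_of_mem _ (Finset.mem_univ_val i)
  have hne : ∀ l ∈ lengths, l ≠ 0 :=
    Multiset.forall_mem_map_iff.mpr fun i _ => (hrect i).partLength_ne_zero hn0
  have hχ : orbifoldEulerChar g lengths = 0 := by
    have hδχ := deltaStatZ_eq_neg_mul_orbifoldEulerChar (g := g) hn0 hrect
    rw [hδ0, Int.cast_zero, zero_eq_mul] at hδχ
    exact hδχ.resolve_left (neg_ne_zero.mpr (Nat.cast_ne_zero.mpr hn0))
  obtain rfl | rfl : g = 1 ∨ g = 0 := by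
    have := orbifoldEulerChar.genus_le_one_of_nonneg hχ.ge
    omega
  · exact .inl ⟨rfl, fun i => orbifoldEulerChar.forall_eq_one_of_genus_one hχ _ (hmem i)⟩
  · refine .inr ⟨rfl, orbifoldEulerChar.eq_of_genus_zero (fun l hl => ?_) ?_⟩
    · exact (Multiset.mem_filter.mp hl).2
    · exact (orbifoldEulerChar.filter_one_lt 0 hne).trans hχ
end
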